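/- Let N ≥ 2, 1 < q ≤ 1* := N/(N-1), a > 0, b > 0, E_q := (1/(N^{N-1} ω_{N-1}))^{q-1}. Define α_v := inf { (1 - ‖u‖_1)/‖u‖_q^q : u ∈ BV(ℝ^N), ‖u‖_{TV}^a + ‖u‖_1^b = 1 } and g(t) := ((1+t)^{1/b} - 1)(1+t)^{(q-1)(N/a - (N-1)/b)} / t^{(q-1)N/a} for t > 0. Then α_v = (1/E_q) inf_{t>0} g(t). -/

import Mathlib

/-!
On the constraint set, writing `t = ‖u‖_{TV}^a / ‖u‖_1^b`, homogeneity turns the objective into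
`g t` divided by the Gagliardo–Nirenberg ratio of `u`. This ratio is at most `E_q`, and it equals
`E_q` for all positive multiples of indicators of balls, which realize every pair of positive values
of `‖u‖_1` and `‖u‖_{TV}`. Hence the infimum over `u` is the infimum over `t` of `g t / E_q`.

The sharp Gagliardo–Nirenberg inequality interpolates, by Hölder's inequality, between `L¹` and the
sharp Sobolev inequality on `BV(ℝ^N)`. The latter follows by mollification from its smooth case,
where the isoperimetric inequality is integrated over the level sets; the isoperimetric inequality
comes from the Brunn–Minkowski inequality, and that one from the Prékopa–Leindler inequality, proved
by induction on the dimension.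
-/

open MeasureTheory Real Filter Topology

noncomputable section

abbrev Euc (N : ℕ) := EuclideanSpace ℝ (Fin N)

/-- The set of values `∫ u div ψ` over admissible test vector fields. -/
def TVSet (N : ℕ) (u : Euc N → ℝ) : Set ℝ :=
  { r | ∃ ψ : Euc N → Euc N, ContDiff ℝ 1 ψ ∧ HasCompactSupport ψ ∧
      (∀ x, ‖ψ x‖ ≤ 1) ∧
      r = ∫ x, u x * (∑ i, fderiv ℝ (fun y => ψ y i) x (EuclideanSpace.single i 1)) }

/-- Total variation of `u`. -/
def tv (N : ℕ) (u : Euc N → ℝ) : ℝ := sSup (TVSet N u)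

/-- `u` is a function of bounded variation on `ℝ^N`. -/
def MemBV (N : ℕ) (u : Euc N → ℝ) : Prop :=
  Integrable u ∧ BddAbove (TVSet N u)

/-- The `L¹` norm. -/
def nrm1 (N : ℕ) (u : Euc N → ℝ) : ℝ := (eLpNorm u 1 volume).toReal

/-- The `L^q` norm, `q` a real exponent. -/
def nrmq (N : ℕ) (q : ℝ) (u : Euc N → ℝ) : ℝ :=
  (eLpNorm u (ENNReal.ofReal q) volume).toReal

/-- Surface area `ω_{N-1}` of the unit sphere in `ℝ^N`, as `N` times the
volume of the unit ball. -/
def omegaS (N : ℕ) : ℝ := N * (volume (Metric.ball (0 : Euc N) 1)).toReal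

/-- The Gagliardo–Nirenberg ratio `‖u‖_q^q / (‖u‖_1^{q-(q-1)N} ‖u‖_{TV}^{(q-1)N})`. -/
def ratioQ (N : ℕ) (q : ℝ) (u : Euc N → ℝ) : ℝ :=
  nrmq N q u ^ q / (nrm1 N u ^ (q - (q-1)*N) * tv N u ^ ((q-1)*(N:ℝ)))

/-- The best constant `E_q` on `BV(ℝ^N)`. -/
def EqSup (N : ℕ) (q : ℝ) : ℝ :=
  sSup { r | ∃ u : Euc N → ℝ, MemBV N u ∧ u ≠ 0 ∧ r = ratioQ N q u }

section LayerCake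

open scoped ENNReal

variable {α : Type*} [MeasurableSpace α] {μ : Measure α} {f : α → ℝ≥0∞}

lemma antitone_measure_ofReal_lt (μ : Measure α) (f : α → ℝ≥0∞) :
    Antitone fun t : ℝ ↦ μ {x | ENNReal.ofReal t < f x} :=
  fun _ _ hst ↦ measure_mono fun _ hx ↦ (ENNReal.ofReal_le_ofReal hst).trans_lt hx

lemma measurable_measure_ofReal_lt (μ : Measure α) (f : α → ℝ≥0∞) :
    Measurable fun t : ℝ ↦ μ {x | ENNReal.ofReal t < f x} :=
  (antitone_measure_ofReal_lt μ f).measurable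

lemma measurableSet_ofReal_lt (hf : Measurable f) (t : ℝ) :
    MeasurableSet {x | ENNReal.ofReal t < f x} :=
  measurableSet_lt measurable_const hf

lemma lintegral_eq_lintegral_meas_ofReal_lt (hf : Measurable f) :
    ∫⁻ x, f x ∂μ = ∫⁻ t in Set.Ioi (0 : ℝ), μ {x | ENNReal.ofReal t < f x} := by
  by_cases htop : μ {x | f x = ∞} = 0
  · have hfin : ∀ᵐ x ∂μ, f x ≠ ∞ := measure_eq_zero_iff_ae_notMem.1 htop
    calc ∫⁻ x, f x ∂μ = ∫⁻ x, ENNReal.ofReal (f x).toReal ∂μ :=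
          lintegral_congr_ae (hfin.mono fun x hx ↦ (ENNReal.ofReal_toReal hx).symm)
      _ = ∫⁻ t in Set.Ioi (0 : ℝ), μ {x | t < (f x).toReal} :=
          lintegral_eq_lintegral_meas_lt μ (.of_forall fun x ↦ ENNReal.toReal_nonneg)
            hf.ennreal_toReal.aemeasurable
      _ = _ := setLIntegral_congr_fun measurableSet_Ioi fun t ht ↦ measure_congr <| by
          filter_upwards [hfin] with x hx
          exact propext (ENNReal.ofReal_lt_iff_lt_toReal (le_of_lt ht) hx).symm
  · rw [lintegral_eq_top_of_measure_eq_top_ne_zero hf.aemeasurable htop, eq_comm, eq_top_iff]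
    calc ∞ = ∫⁻ _ in Set.Ioi (0 : ℝ), μ {x | f x = ∞} := by
          rw [setLIntegral_const, Real.volume_Ioi, ENNReal.mul_top htop]
      _ ≤ _ := lintegral_mono fun t ↦ measure_mono fun x (hx : f x = ∞) ↦ by
          simp [hx]

end LayerCake

section PrekopaLeindler

open scoped ENNReal Pointwise

lemma volume_add_volume_le_volume_add_of_isCompact {K L : Set ℝ} (hK : IsCompact K)
    (hL : IsCompact L) (hK' : K.Nonempty) (hL' : L.Nonempty) :
    volume K + volume L ≤ volume (K + L) := by
  obtain ⟨a, haK, ha⟩ := hK.exists_isGreatest hK'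
  obtain ⟨b, hbL, hb⟩ := hL.exists_isLeast hL'
  have hinter : (b +ᵥ K) ∩ (a +ᵥ L) ⊆ {a + b} := by
    rintro _ ⟨⟨x, hx, rfl⟩, y, hy, hxy⟩
    have := ha hx
    have := hb hy
    simp only [vadd_eq_add, Set.mem_singleton_iff] at hxy ⊢
    linarith
  calc volume K + volume L = volume (b +ᵥ K) + volume (a +ᵥ L) := by
        simp only [measure_vadd]
    _ = volume ((b +ᵥ K) ∪ (a +ᵥ L)) := by
        refine (measure_union₀ (hL.vadd a).measurableSet.nullMeasurableSet ?_).symm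
        exact measure_mono_null hinter (by simp)
    _ ≤ volume (K + L) := by
        refine measure_mono (Set.union_subset ?_ ?_)
        · rintro _ ⟨x, hx, rfl⟩
          simpa only [vadd_eq_add, add_comm b] using Set.add_mem_add hx hbL
        · rintro _ ⟨y, hy, rfl⟩
          exact Set.add_mem_add haK hy

lemma volume_add_volume_le_volume_add {A B : Set ℝ} (hA : MeasurableSet A) (hB : MeasurableSet B)
    (hA' : A.Nonempty) (hB' : B.Nonempty) : volume A + volume B ≤ volume (A + B) := by
  obtain ⟨a, ha⟩ := hA'
  obtain ⟨b, hb⟩ := hB'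
  rw [hA.measure_eq_iSup_isCompact, hB.measure_eq_iSup_isCompact]
  simp only [iSup_and']
  refine ENNReal.biSup_add_biSup_le' ⟨∅, by simp⟩ ⟨∅, by simp⟩ ?_
  rintro K ⟨hKA, hK⟩ L ⟨hLB, hL⟩
  calc volume K + volume L ≤ volume (insert a K) + volume (insert b L) := by
        gcongr <;> exact Set.subset_insert _ _
    _ ≤ volume (insert a K + insert b L) :=
        volume_add_volume_le_volume_add_of_isCompact (hK.insert a) (hL.insert b) (by simp) (by simp)
    _ ≤ volume (A + B) :=
        measure_mono <| Set.add_subset_add (Set.insert_subset ha hKA) (Set.insert_subset hb hLB)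

lemma ofReal_mul_volume_add_le_volume_smul_add_smul {A B : Set ℝ} (hA : MeasurableSet A)
    (hB : MeasurableSet B) (hA' : A.Nonempty) (hB' : B.Nonempty) {l m : ℝ} (hl : 0 < l)
    (hm : 0 < m) :
    ENNReal.ofReal l * volume A + ENNReal.ofReal m * volume B ≤ volume (l • A + m • B) := by
  simpa [Measure.addHaar_smul, abs_of_pos hl, abs_of_pos hm] using
    volume_add_volume_le_volume_add (hA.const_smul₀ l) (hB.const_smul₀ m) hA'.smul_set hB'.smul_set

lemma ennreal_geom_mean_le_arith_mean2_weighted (x y : ℝ≥0∞) {l m : ℝ} (hl : 0 < l) (hm : 0 < m)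
    (hlm : l + m = 1) : x ^ l * y ^ m ≤ ENNReal.ofReal l * x + ENNReal.ofReal m * y := by
  induction x with
  | top => simp [hl]
  | coe x =>
    induction y with
    | top => simp [hm]
    | coe y =>
      rw [← ENNReal.coe_rpow_of_nonneg _ hl.le, ← ENNReal.coe_rpow_of_nonneg _ hm.le,
        ENNReal.ofReal_eq_coe_nnreal hl.le, ENNReal.ofReal_eq_coe_nnreal hm.le]
      exact_mod_cast NNReal.geom_mean_le_arith_mean2_weighted ⟨l, hl.le⟩ ⟨m, hm.le⟩ x y
        (NNReal.eq hlm)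

lemma tendsto_lintegral_min_natCast {α : Type*} [MeasurableSpace α] (μ : Measure α)
    {f : α → ℝ≥0∞} (hf : Measurable f) :
    Tendsto (fun k : ℕ ↦ ∫⁻ x, min (f x) k ∂μ) atTop (𝓝 (∫⁻ x, f x ∂μ)) := by
  refine lintegral_tendsto_of_tendsto_of_monotone
    (fun k ↦ (hf.min measurable_const).aemeasurable) (.of_forall fun x i j hij ↦ ?_)
    (.of_forall fun x ↦ ?_)
  · exact min_le_min_left _ (Nat.cast_le.2 hij)
  · simpa using (tendsto_const_nhds (x := f x)).min ENNReal.tendsto_nat_nhds_top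

/-- `PrekopaLeindler μ l m` says that `μ` satisfies the Prékopa–Leindler inequality with
weights `l` and `m`. -/
def PrekopaLeindler {E : Type*} [Add E] [SMul ℝ E] [MeasurableSpace E] (μ : Measure E)
    (l m : ℝ) : Prop :=
  ∀ ⦃f g h : E → ℝ≥0∞⦄, Measurable f → Measurable g → Measurable h →
    (∀ x y, f x ^ l * g y ^ m ≤ h (l • x + m • y)) →
    (∫⁻ x, f x ∂μ) ^ l * (∫⁻ x, g x ∂μ) ^ m ≤ ∫⁻ x, h x ∂μ

namespace PrekopaLeindler

variable {l m : ℝ}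

section Real

variable {f g h : ℝ → ℝ≥0∞}

/- When both suprema equal `1`, the level sets of `f` and `g` below height `1` are nonempty, and
the one-dimensional Brunn–Minkowski inequality applies level by level. -/
lemma real_of_iSup_eq_one (hl : 0 < l) (hm : 0 < m) (hlm : l + m = 1) (hf : Measurable f)
    (hg : Measurable g) (hh : Measurable h) (hf1 : ⨆ x, f x = 1) (hg1 : ⨆ x, g x = 1)
    (H : ∀ x y, f x ^ l * g y ^ m ≤ h (l • x + m • y)) :
    (∫⁻ x, f x) ^ l * (∫⁻ x, g x) ^ m ≤ ∫⁻ x, h x := by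
  have levels {t : ℝ} (ht : 0 < t) :
      ENNReal.ofReal l * volume {x | ENNReal.ofReal t < f x} +
        ENNReal.ofReal m * volume {x | ENNReal.ofReal t < g x} ≤
        volume {x | ENNReal.ofReal t < h x} := by
    by_cases ht1 : ENNReal.ofReal t < 1
    · have hf' : {x | ENNReal.ofReal t < f x}.Nonempty :=
        (lt_iSup_iff.1 (hf1.symm ▸ ht1)).imp fun _ hx ↦ hx
      have hg' : {x | ENNReal.ofReal t < g x}.Nonempty :=
        (lt_iSup_iff.1 (hg1.symm ▸ ht1)).imp fun _ hx ↦ hx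
      refine (ofReal_mul_volume_add_le_volume_smul_add_smul (measurableSet_ofReal_lt hf t)
        (measurableSet_ofReal_lt hg t) hf' hg' hl hm).trans (measure_mono ?_)
      rintro _ ⟨_, ⟨x, hx, rfl⟩, _, ⟨y, hy, rfl⟩, rfl⟩
      calc ENNReal.ofReal t = ENNReal.ofReal t ^ l * ENNReal.ofReal t ^ m := by
            rw [← ENNReal.rpow_add _ _ (by simpa) ENNReal.ofReal_ne_top, hlm, ENNReal.rpow_one]
        _ < f x ^ l * g y ^ m :=
            ENNReal.mul_lt_mul (ENNReal.rpow_lt_rpow hx hl) (ENNReal.rpow_lt_rpow hy hm)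
        _ ≤ h (l • x + m • y) := H x y
    · have hf' (x : ℝ) : ¬ ENNReal.ofReal t < f x :=
        not_lt.2 (((le_iSup f x).trans_eq hf1).trans (not_lt.1 ht1))
      have hg' (x : ℝ) : ¬ ENNReal.ofReal t < g x :=
        not_lt.2 (((le_iSup g x).trans_eq hg1).trans (not_lt.1 ht1))
      simp [hf', hg']
  refine (ennreal_geom_mean_le_arith_mean2_weighted _ _ hl hm hlm).trans ?_
  rw [lintegral_eq_lintegral_meas_ofReal_lt hf, lintegral_eq_lintegral_meas_ofReal_lt hg,
    lintegral_eq_lintegral_meas_ofReal_lt hh, ← lintegral_const_mul' _ _ ENNReal.ofReal_ne_top,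
    ← lintegral_const_mul' _ _ ENNReal.ofReal_ne_top,
    ← lintegral_add_left ((measurable_measure_ofReal_lt _ f).const_mul _)]
  exact setLIntegral_mono' measurableSet_Ioi fun t ht ↦ levels ht

lemma real_of_iSup_ne_top (hl : 0 < l) (hm : 0 < m) (hlm : l + m = 1) (hf : Measurable f)
    (hg : Measurable g) (hh : Measurable h) (hf1 : ⨆ x, f x ≠ ∞) (hg1 : ⨆ x, g x ≠ ∞)
    (H : ∀ x y, f x ^ l * g y ^ m ≤ h (l • x + m • y)) :
    (∫⁻ x, f x) ^ l * (∫⁻ x, g x) ^ m ≤ ∫⁻ x, h x := by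
  set P := ⨆ x, f x
  set Q := ⨆ x, g x
  by_cases hP0 : P = 0
  · simp [ENNReal.iSup_eq_zero.1 hP0, hl]
  by_cases hQ0 : Q = 0
  · simp [ENNReal.iSup_eq_zero.1 hQ0, hm]
  have mul_rpow (c d x y : ℝ≥0∞) :
      (c * x) ^ l * (d * y) ^ m = c ^ l * d ^ m * (x ^ l * y ^ m) := by
    rw [ENNReal.mul_rpow_of_nonneg _ _ hl.le, ENNReal.mul_rpow_of_nonneg _ _ hm.le,
      mul_mul_mul_comm]
  have hc0 : P⁻¹ ^ l * Q⁻¹ ^ m ≠ 0 := by simp [ENNReal.rpow_eq_zero_iff, hl.le, hm.le, hf1, hg1]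
  have hctop : P⁻¹ ^ l * Q⁻¹ ^ m ≠ ∞ :=
    ENNReal.mul_ne_top (ENNReal.rpow_ne_top_of_nonneg hl.le (ENNReal.inv_ne_top.2 hP0))
      (ENNReal.rpow_ne_top_of_nonneg hm.le (ENNReal.inv_ne_top.2 hQ0))
  have key := real_of_iSup_eq_one (h := fun x ↦ P⁻¹ ^ l * Q⁻¹ ^ m * h x) hl hm hlm
    (hf.const_mul P⁻¹) (hg.const_mul Q⁻¹) (hh.const_mul _)
    (by rw [← ENNReal.mul_iSup]; exact ENNReal.inv_mul_cancel hP0 hf1)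
    (by rw [← ENNReal.mul_iSup]; exact ENNReal.inv_mul_cancel hQ0 hg1)
    (fun x y ↦ by rw [mul_rpow]; gcongr; exact H x y)
  rw [lintegral_const_mul _ hf, lintegral_const_mul _ hg, lintegral_const_mul _ hh,
    mul_rpow] at key
  exact (ENNReal.mul_le_mul_iff_right hc0 hctop).1 key

theorem real (hl : 0 < l) (hm : 0 < m) (hlm : l + m = 1) :
    PrekopaLeindler (volume : Measure ℝ) l m := by
  intro f g h hf hg hh H
  by_cases hf0 : ∫⁻ x, f x = 0
  · simp [hf0, hl]
  by_cases hg0 : ∫⁻ x, g x = 0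
  · simp [hg0, hm]
  have lim : Tendsto (fun k : ℕ ↦ (∫⁻ x, min (f x) k) ^ l * (∫⁻ x, min (g x) k) ^ m) atTop
      (𝓝 ((∫⁻ x, f x) ^ l * (∫⁻ x, g x) ^ m)) :=
    ENNReal.Tendsto.mul ((tendsto_lintegral_min_natCast _ hf).ennrpow_const l)
      (.inl (by simp [ENNReal.rpow_eq_zero_iff, hf0, hl.not_gt]))
      ((tendsto_lintegral_min_natCast _ hg).ennrpow_const m)
      (.inl (by simp [ENNReal.rpow_eq_zero_iff, hg0, hm.not_gt]))
  have bdd (f : ℝ → ℝ≥0∞) (k : ℕ) : ⨆ x, min (f x) k ≠ ∞ :=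
    ne_top_of_le_ne_top (ENNReal.natCast_ne_top k) (iSup_le fun x ↦ min_le_right _ _)
  refine le_of_tendsto' lim fun k ↦ real_of_iSup_ne_top hl hm hlm (hf.min measurable_const)
    (hg.min measurable_const) hh (bdd f k) (bdd g k) fun x y ↦ (H x y).trans' ?_
  gcongr <;> exact min_le_left _ _

end Real

lemma dirac {E : Type*} [AddCommGroup E] [Module ℝ E] [MeasurableSpace E] (l m : ℝ) :
    PrekopaLeindler (Measure.dirac (0 : E)) l m := by
  intro f g h hf hg hh H
  simpa [lintegral_dirac' _ hf, lintegral_dirac' _ hg, lintegral_dirac' _ hh] using H 0 0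

variable {E F : Type*} [AddCommGroup E] [Module ℝ E] [MeasurableSpace E]
  [AddCommGroup F] [Module ℝ F] [MeasurableSpace F] {μ : Measure E} {ν : Measure F}

lemma prod [SFinite ν] (hμ : PrekopaLeindler μ l m) (hν : PrekopaLeindler ν l m) :
    PrekopaLeindler (μ.prod ν) l m := by
  intro f g h hf hg hh H
  rw [lintegral_prod _ hf.aemeasurable, lintegral_prod _ hg.aemeasurable,
    lintegral_prod _ hh.aemeasurable]
  refine hμ hf.lintegral_prod_right' hg.lintegral_prod_right' hh.lintegral_prod_right' fun x y ↦ ?_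
  exact hν (hf.comp measurable_prodMk_left) (hg.comp measurable_prodMk_left)
    (hh.comp measurable_prodMk_left) fun x' y' ↦ H (x, x') (y, y')

lemma of_measurePreserving {φ : E →ₗ[ℝ] F} (hφ : MeasurePreserving φ μ ν)
    (hμ : PrekopaLeindler μ l m) : PrekopaLeindler ν l m := by
  intro f g h hf hg hh H
  rw [← hφ.lintegral_comp hf, ← hφ.lintegral_comp hg, ← hφ.lintegral_comp hh]
  refine hμ (hf.comp hφ.measurable) (hg.comp hφ.measurable) (hh.comp hφ.measurable) fun x y ↦ ?_
  simpa using H (φ x) (φ y)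

lemma smul_measure (hl : 0 ≤ l) (hm : 0 ≤ m) (hlm : l + m = 1) (hμ : PrekopaLeindler μ l m)
    (c : ℝ≥0∞) : PrekopaLeindler (c • μ) l m := by
  intro f g h hf hg hh H
  simp only [lintegral_smul_measure, smul_eq_mul]
  calc (c * ∫⁻ x, f x ∂μ) ^ l * (c * ∫⁻ x, g x ∂μ) ^ m
      = c ^ l * c ^ m * ((∫⁻ x, f x ∂μ) ^ l * (∫⁻ x, g x ∂μ) ^ m) := by
        rw [ENNReal.mul_rpow_of_nonneg _ _ hl, ENNReal.mul_rpow_of_nonneg _ _ hm, mul_mul_mul_comm]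
    _ ≤ c * ∫⁻ x, h x ∂μ := by
        rw [← ENNReal.rpow_add_of_nonneg _ _ hl hm, hlm, ENNReal.rpow_one]
        gcongr
        exact hμ hf hg hh H

theorem pi_fin (hl : 0 < l) (hm : 0 < m) (hlm : l + m = 1) (n : ℕ) :
    PrekopaLeindler (volume : Measure (Fin n → ℝ)) l m := by
  induction n with
  | zero => rw [volume_pi, Measure.pi_of_empty _ 0]; exact dirac l m
  | succ n ih =>
    have hφ : MeasurePreserving (Fin.consLinearEquiv ℝ fun _ : Fin (n + 1) ↦ ℝ).toLinearMap
        (volume.prod volume) volume := by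
      have hcons : ⇑(Fin.consLinearEquiv ℝ fun _ : Fin (n + 1) ↦ ℝ) =
          (MeasurableEquiv.piFinSuccAbove (fun _ ↦ ℝ) 0).symm := by
        ext x i
        simp [MeasurableEquiv.piFinSuccAbove]
      rw [LinearEquiv.coe_toLinearMap, hcons]
      exact (volume_preserving_piFinSuccAbove (fun _ : Fin (n + 1) ↦ ℝ) 0).symm
    exact of_measurePreserving hφ ((real hl hm hlm).prod ih)

theorem addHaar {E : Type*} [NormedAddCommGroup E] [NormedSpace ℝ E] [FiniteDimensional ℝ E]
    [MeasurableSpace E] [BorelSpace E] (μ : Measure E) [μ.IsAddHaarMeasure]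
    (hl : 0 < l) (hm : 0 < m) (hlm : l + m = 1) : PrekopaLeindler μ l m := by
  let e : (Fin (Module.finrank ℝ E) → ℝ) ≃L[ℝ] E := ContinuousLinearEquiv.ofFinrankEq (by simp)
  have : (Measure.map e volume).IsAddHaarMeasure := e.isAddHaarMeasure_map volume
  rw [Measure.isAddLeftInvariant_eq_smul μ (Measure.map e volume)]
  exact smul_measure hl.le hm.le hlm (of_measurePreserving (φ := e.toLinearMap)
    (e.continuous.measurable.measurePreserving volume) (pi_fin hl hm hlm _)) _

end PrekopaLeindler

end PrekopaLeindler

section BrunnMinkowski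

open scoped ENNReal Pointwise
open Module (finrank)

variable {E : Type*} [NormedAddCommGroup E] [NormedSpace ℝ E] [FiniteDimensional ℝ E]
  [MeasurableSpace E] [BorelSpace E] {A B : Set E}

lemma addHaar_rpow_mul_rpow_le_smul_add_smul (μ : Measure E) [μ.IsAddHaarMeasure]
    (hA : MeasurableSet A) (hB : MeasurableSet B) {l m : ℝ} (hl : 0 < l) (hm : 0 < m)
    (hlm : l + m = 1) : μ A ^ l * μ B ^ m ≤ μ (l • A + m • B) := by
  have hC := measurableSet_toMeasurable μ (l • A + m • B)
  rw [← measure_toMeasurable (l • A + m • B), ← lintegral_indicator_one hA,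
    ← lintegral_indicator_one hB, ← lintegral_indicator_one hC]
  refine PrekopaLeindler.addHaar μ hl hm hlm (measurable_one.indicator hA)
    (measurable_one.indicator hB) (measurable_one.indicator hC) fun x y ↦ ?_
  by_cases hx : x ∈ A
  · by_cases hy : y ∈ B
    · have hxy : l • x + m • y ∈ toMeasurable μ (l • A + m • B) := subset_toMeasurable _ _ <|
        Set.add_mem_add (Set.smul_mem_smul_set hx) (Set.smul_mem_smul_set hy)
      simp [hx, hy, hxy]
    · simp [hy, hm]
  · simp [hx, hl]

/- The multiplicative inequality is applied to the dilates of `A` and `B` of equal measure. -/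
lemma ofReal_add_pow_le_addHaar_add (μ : Measure E) [μ.IsAddHaarMeasure] (hA : MeasurableSet A)
    (hB : MeasurableSet B) {s t : ℝ} (hs : 0 < s) (ht : 0 < t)
    (hAs : μ A = ENNReal.ofReal (s ^ finrank ℝ E)) (hBt : μ B = ENNReal.ofReal (t ^ finrank ℝ E)) :
    ENNReal.ofReal ((s + t) ^ finrank ℝ E) ≤ μ (A + B) := by
  have hst : 0 < s + t := add_pos hs ht
  have measure_dilate {D : Set E} {r : ℝ} (hr : 0 < r)
      (hD : μ D = ENNReal.ofReal (r ^ finrank ℝ E)) :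
      μ ((r / (s + t))⁻¹ • D) = ENNReal.ofReal ((s + t) ^ finrank ℝ E) := by
    rw [Measure.addHaar_smul, hD, ← ENNReal.ofReal_mul (abs_nonneg _), abs_of_pos (by positivity),
      ← mul_pow, inv_div, div_mul_cancel₀ _ hr.ne']
  have hl : 0 < s / (s + t) := by positivity
  have hm : 0 < t / (s + t) := by positivity
  have hlm : s / (s + t) + t / (s + t) = 1 := by rw [← add_div, div_self hst.ne']
  have hpos : ENNReal.ofReal ((s + t) ^ finrank ℝ E) ≠ 0 := by
    simpa using pow_pos hst (finrank ℝ E)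
  simpa only [measure_dilate hs hAs, measure_dilate ht hBt, smul_inv_smul₀ hl.ne',
    smul_inv_smul₀ hm.ne', ← ENNReal.rpow_add _ _ hpos ENNReal.ofReal_ne_top, hlm,
    ENNReal.rpow_one] using
    addHaar_rpow_mul_rpow_le_smul_add_smul μ (hA.const_smul₀ (s / (s + t))⁻¹)
      (hB.const_smul₀ (t / (s + t))⁻¹) hl hm hlm

lemma addHaar_le_addHaar_add_left (μ : Measure E) [μ.IsAddHaarMeasure] (hA : A.Nonempty)
    (B : Set E) : μ B ≤ μ (A + B) := by
  obtain ⟨a, ha⟩ := hA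
  rw [← measure_vadd μ a B]
  exact measure_mono (Set.image_subset_iff.2 fun b hb ↦ Set.add_mem_add ha hb)

theorem addHaar_rpow_add_addHaar_rpow_le [Nontrivial E] (μ : Measure E) [μ.IsAddHaarMeasure]
    (hA : MeasurableSet A) (hB : MeasurableSet B) (hA' : A.Nonempty) (hB' : B.Nonempty) :
    μ A ^ (finrank ℝ E : ℝ)⁻¹ + μ B ^ (finrank ℝ E : ℝ)⁻¹ ≤ μ (A + B) ^ (finrank ℝ E : ℝ)⁻¹ := by
  have hn : finrank ℝ E ≠ 0 := Module.finrank_pos.ne'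
  have hn' : (0 : ℝ) < (finrank ℝ E : ℝ)⁻¹ := by positivity
  have hAB : μ A ≤ μ (A + B) := add_comm A B ▸ addHaar_le_addHaar_add_left μ hB' A
  have hBA : μ B ≤ μ (A + B) := addHaar_le_addHaar_add_left μ hA' B
  rcases eq_or_ne (μ A) 0 with hA0 | hA0
  · simpa [hA0, hn'] using ENNReal.rpow_le_rpow hBA hn'.le
  rcases eq_or_ne (μ B) 0 with hB0 | hB0
  · simpa [hB0, hn'] using ENNReal.rpow_le_rpow hAB hn'.le
  rcases eq_or_ne (μ (A + B)) ∞ with htop | htop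
  · simp [htop, hn']
  have eq_ofReal {D : Set E} (hD : μ D ≤ μ (A + B)) :
      μ D = ENNReal.ofReal ((μ D ^ (finrank ℝ E : ℝ)⁻¹).toReal ^ finrank ℝ E) := by
    rw [← ENNReal.toReal_pow, ENNReal.rpow_inv_natCast_pow hn,
      ENNReal.ofReal_toReal (ne_top_of_le_ne_top htop hD)]
  have rpow_ne_top {D : Set E} (hD : μ D ≤ μ (A + B)) : μ D ^ (finrank ℝ E : ℝ)⁻¹ ≠ ∞ :=
    ENNReal.rpow_ne_top_of_nonneg hn'.le (ne_top_of_le_ne_top htop hD)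
  have rpow_pos {D : Set E} (hD : μ D ≤ μ (A + B)) (hD0 : μ D ≠ 0) :
      0 < (μ D ^ (finrank ℝ E : ℝ)⁻¹).toReal :=
    ENNReal.toReal_pos (by simp [ENNReal.rpow_eq_zero_iff, hD0]) (rpow_ne_top hD)
  have key := ofReal_add_pow_le_addHaar_add μ hA hB (rpow_pos hAB hA0) (rpow_pos hBA hB0)
    (eq_ofReal hAB) (eq_ofReal hBA)
  rw [ENNReal.le_rpow_inv_iff (by positivity), ENNReal.rpow_natCast]
  rwa [← ENNReal.toReal_add (rpow_ne_top hAB) (rpow_ne_top hBA), ← ENNReal.toReal_pow,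
    ENNReal.ofReal_toReal] at key
  exact ENNReal.pow_ne_top (ENNReal.add_ne_top.2 ⟨rpow_ne_top hAB, rpow_ne_top hBA⟩)

end BrunnMinkowski

section Isoperimetry

open scoped ENNReal Pointwise
open Module (finrank)

variable {E : Type*} [NormedAddCommGroup E] [NormedSpace ℝ E]
  [MeasurableSpace E] {A : Set E}

/-- The isoperimetric constant `n |B|^{1/n}` of an `n`-dimensional space, `B` being the unit ball:
the perimeter of a set `A` is at least this constant times `|A|^{1 - 1/n}`. -/
def isoperimetricConst (μ : Measure E) : ℝ≥0∞ :=
  finrank ℝ E * μ (Metric.ball 0 1) ^ (finrank ℝ E : ℝ)⁻¹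

variable [FiniteDimensional ℝ E]

lemma isoperimetricConst_ne_top (μ : Measure E) [IsFiniteMeasureOnCompacts μ] :
    isoperimetricConst μ ≠ ∞ :=
  ENNReal.mul_ne_top (ENNReal.natCast_ne_top _)
    (ENNReal.rpow_ne_top_of_nonneg (by positivity) measure_ball_lt_top.ne)

lemma isoperimetricConst_ne_zero [Nontrivial E] (μ : Measure E) [μ.IsOpenPosMeasure] :
    isoperimetricConst μ ≠ 0 := by
  refine mul_ne_zero (by exact_mod_cast Module.finrank_pos.ne') ?_
  simp [ENNReal.rpow_eq_zero_iff, Module.finrank_pos, (Metric.measure_ball_pos μ 0 one_pos).ne']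

variable [BorelSpace E]

theorem addHaar_add_le_addHaar_thickening [Nontrivial E] (μ : Measure E) [μ.IsAddHaarMeasure]
    (hA : MeasurableSet A) (hA' : A.Nonempty) {ε : ℝ} (hε : 0 < ε) :
    μ A + ENNReal.ofReal ε * (isoperimetricConst μ * μ A ^ (1 - (finrank ℝ E : ℝ)⁻¹)) ≤
      μ (Metric.thickening ε A) := by
  set n := finrank ℝ E
  have hn : n ≠ 0 := Module.finrank_pos.ne'
  have hball : μ (Metric.ball 0 ε) ^ (n : ℝ)⁻¹ =
      ENNReal.ofReal ε * μ (Metric.ball 0 1) ^ (n : ℝ)⁻¹ := by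
    rw [Measure.addHaar_ball_of_pos _ _ hε, ENNReal.mul_rpow_of_nonneg _ _ (by positivity),
      ENNReal.ofReal_pow hε.le, ENNReal.pow_rpow_inv_natCast hn]
  have hpow : μ A ^ (1 - (n : ℝ)⁻¹) = (μ A ^ (n : ℝ)⁻¹) ^ (n - 1) := by
    rw [← ENNReal.rpow_mul_natCast, Nat.cast_pred (Nat.pos_of_ne_zero hn), mul_sub,
      inv_mul_cancel₀ (by positivity), mul_one]
  calc μ A + ENNReal.ofReal ε * (isoperimetricConst μ * μ A ^ (1 - (n : ℝ)⁻¹))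
      = (μ A ^ (n : ℝ)⁻¹) ^ n +
          n * (μ A ^ (n : ℝ)⁻¹) ^ (n - 1) * μ (Metric.ball 0 ε) ^ (n : ℝ)⁻¹ := by
        rw [ENNReal.rpow_inv_natCast_pow hn, hpow, hball, isoperimetricConst]
        ring
    _ ≤ (μ A ^ (n : ℝ)⁻¹ + μ (Metric.ball 0 ε) ^ (n : ℝ)⁻¹) ^ n :=
        pow_add_mul_le_add_pow_of_sq_nonneg (by positivity) (by positivity) (by positivity)
          (by positivity) n
    _ ≤ (μ (A + Metric.ball 0 ε) ^ (n : ℝ)⁻¹) ^ n := by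
        gcongr
        exact addHaar_rpow_add_addHaar_rpow_le μ hA measurableSet_ball hA' ⟨0, by simpa⟩
    _ = μ (Metric.thickening ε A) := by rw [ENNReal.rpow_inv_natCast_pow hn, add_ball_zero]

/- The isoperimetric inequality is applied to each level set `{t < f}`, whose `ε`-thickening lies
in `{t < g}`, and integrated over `t`. -/
lemma lintegral_add_le_lintegral_of_le_of_mem_ball (μ : Measure E) [μ.IsAddHaarMeasure]
    (hn : 2 ≤ finrank ℝ E) {f g : E → ℝ≥0∞} (hf : Measurable f) (hg : Measurable g) {ε : ℝ}
    (hε : 0 < ε) (hfg : ∀ x, ∀ y ∈ Metric.ball x ε, f x ≤ g y) :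
    ∫⁻ x, f x ∂μ + ENNReal.ofReal ε * (isoperimetricConst μ *
      ∫⁻ t in Set.Ioi (0 : ℝ), μ {x | ENNReal.ofReal t < f x} ^ (1 - (finrank ℝ E : ℝ)⁻¹)) ≤
      ∫⁻ x, g x ∂μ := by
  have : Nontrivial E := Module.nontrivial_of_finrank_pos (R := ℝ) (by lia)
  have hn' : 0 < 1 - (finrank ℝ E : ℝ)⁻¹ :=
    sub_pos.2 (inv_lt_one_of_one_lt₀ (by exact_mod_cast hn))
  have levels (t : ℝ) : μ {x | ENNReal.ofReal t < f x} + ENNReal.ofReal ε * (isoperimetricConst μ *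
      μ {x | ENNReal.ofReal t < f x} ^ (1 - (finrank ℝ E : ℝ)⁻¹)) ≤
      μ {x | ENNReal.ofReal t < g x} := by
    rcases Set.eq_empty_or_nonempty {x | ENNReal.ofReal t < f x} with hempty | hne
    · simp [hempty, hn']
    refine (addHaar_add_le_addHaar_thickening μ (measurableSet_ofReal_lt hf t) hne hε).trans
      (measure_mono fun y hy ↦ ?_)
    obtain ⟨x, hx, hxy⟩ := Metric.mem_thickening_iff.1 hy
    exact lt_of_lt_of_le hx (hfg x y hxy)
  have hmeas := (measurable_measure_ofReal_lt μ f).pow_const (1 - (finrank ℝ E : ℝ)⁻¹)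
  rw [lintegral_eq_lintegral_meas_ofReal_lt hf, lintegral_eq_lintegral_meas_ofReal_lt hg,
    ← lintegral_const_mul _ hmeas, ← lintegral_const_mul _ (hmeas.const_mul _),
    ← lintegral_add_left (measurable_measure_ofReal_lt μ f)]
  exact lintegral_mono fun t ↦ levels t

end Isoperimetry

section LevelSets

open scoped ENNReal

variable {α : Type*} [MeasurableSpace α] {μ : Measure α} {f : α → ℝ≥0∞} {p q : ℝ}

lemma setLIntegral_rpow_sub_one_le (hpq : p.HolderConjugate q) (hf : Measurable f) {s : Set α}
    (hs : MeasurableSet s) :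
    ∫⁻ x in s, f x ^ (p - 1) ∂μ ≤ μ s ^ p⁻¹ * (∫⁻ x, f x ^ p ∂μ) ^ q⁻¹ := by
  have hind (x : α) : s.indicator (1 : α → ℝ≥0∞) x ^ p = s.indicator 1 x := by
    by_cases hx : x ∈ s <;> simp [hx, hpq.pos]
  calc ∫⁻ x in s, f x ^ (p - 1) ∂μ = ∫⁻ x, s.indicator 1 x * f x ^ (p - 1) ∂μ := by
        rw [← lintegral_indicator hs]
        exact lintegral_congr fun x ↦ by by_cases hx : x ∈ s <;> simp [hx]
    _ ≤ (∫⁻ x, s.indicator 1 x ^ p ∂μ) ^ (1 / p) *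
          (∫⁻ x, (f x ^ (p - 1)) ^ q ∂μ) ^ (1 / q) :=
        ENNReal.lintegral_mul_le_Lp_mul_Lq μ hpq (measurable_one.indicator hs).aemeasurable
          (hf.pow_const _).aemeasurable
    _ = μ s ^ p⁻¹ * (∫⁻ x, f x ^ p ∂μ) ^ q⁻¹ := by
        simp only [hind, lintegral_indicator_one hs, ← ENNReal.rpow_mul, hpq.sub_one_mul_conj,
          one_div]

/- Layer cake for the measure of density `f ^ (p - 1)`, with Hölder's inequality on each level. -/
theorem lintegral_rpow_rpow_inv_le_lintegral_meas_rpow (hp : 1 < p) (hf : Measurable f)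
    (hfin : ∫⁻ x, f x ^ p ∂μ ≠ ∞) :
    (∫⁻ x, f x ^ p ∂μ) ^ p⁻¹ ≤
      ∫⁻ t in Set.Ioi (0 : ℝ), μ {x | ENNReal.ofReal t < f x} ^ p⁻¹ := by
  have hpq := Real.HolderConjugate.conjExponent hp
  set q := p.conjExponent
  set I := ∫⁻ x, f x ^ p ∂μ
  rcases eq_or_ne I 0 with hI0 | hI0
  · simp [hI0, hpq.pos]
  have hpow : Measurable fun x ↦ f x ^ (p - 1) := hf.pow_const _
  have hqtop : I ^ q⁻¹ ≠ ∞ := ENNReal.rpow_ne_top_of_nonneg hpq.symm.inv_nonneg hfin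
  have hq0 : I ^ q⁻¹ ≠ 0 := by simp [ENNReal.rpow_eq_zero_iff, hI0, hfin]
  refine (ENNReal.mul_le_mul_iff_left hq0 hqtop).1 ?_
  calc I ^ p⁻¹ * I ^ q⁻¹ = I := by
        rw [← ENNReal.rpow_add _ _ hI0 hfin, hpq.inv_add_inv_eq_one, ENNReal.rpow_one]
    _ = ∫⁻ x, f x ∂(μ.withDensity fun x ↦ f x ^ (p - 1)) := by
        rw [lintegral_withDensity_eq_lintegral_mul _ hpow hf]
        refine lintegral_congr fun x ↦ ?_
        rw [Pi.mul_apply]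
        nth_rw 3 [← ENNReal.rpow_one (f x)]
        rw [← ENNReal.rpow_add_of_nonneg _ _ (by linarith) zero_le_one, sub_add_cancel]
    _ ≤ ∫⁻ t in Set.Ioi (0 : ℝ), μ {x | ENNReal.ofReal t < f x} ^ p⁻¹ * I ^ q⁻¹ := by
        rw [lintegral_eq_lintegral_meas_ofReal_lt hf]
        refine lintegral_mono fun t ↦ ?_
        rw [withDensity_apply _ (measurableSet_ofReal_lt hf t)]
        exact setLIntegral_rpow_sub_one_le hpq hf (measurableSet_ofReal_lt hf t)
    _ = _ := lintegral_mul_const' _ _ hqtop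

end LevelSets

section Sobolev

open scoped ENNReal
open Module (finrank)

variable {E F : Type*} [NormedAddCommGroup E] [NormedSpace ℝ E] [NormedAddCommGroup F]
  [NormedSpace ℝ F] {w : E → F}

lemma exists_forall_norm_le_add_mul_norm_fderiv_add (hw : ContDiff ℝ 1 w)
    (hc : HasCompactSupport w) {η : ℝ} (hη : 0 < η) :
    ∃ ε > 0, ε ≤ 1 ∧ ∀ x, ∀ y ∈ Metric.ball x ε, ‖w x‖ ≤ ‖w y‖ + ε * (‖fderiv ℝ w y‖ + η) := by
  obtain ⟨δ, hδ, hcont⟩ := Metric.uniformContinuous_iff.1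
    ((hc.fderiv ℝ).uniformContinuous_of_continuous (hw.continuous_fderiv one_ne_zero)) η hη
  refine ⟨min δ 1, by positivity, min_le_right _ _, fun x y hy ↦ ?_⟩
  have hbound (z : E) (hz : z ∈ Metric.ball y (min δ 1)) :
      ‖fderiv ℝ w z‖ ≤ ‖fderiv ℝ w y‖ + η := by
    have hzy : ‖fderiv ℝ w z - fderiv ℝ w y‖ < η :=
      dist_eq_norm (fderiv ℝ w z) _ ▸ hcont ((Metric.mem_ball.1 hz).trans_le (min_le_left _ _))
    linarith [norm_le_norm_add_norm_sub' (fderiv ℝ w z) (fderiv ℝ w y)]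
  have hxy : ‖x - y‖ ≤ min δ 1 := by
    simpa [dist_eq_norm, norm_sub_rev y x] using (Metric.mem_ball.1 hy).le
  calc ‖w x‖ ≤ ‖w y‖ + ‖w x - w y‖ := norm_le_norm_add_norm_sub' _ _
    _ ≤ ‖w y‖ + (‖fderiv ℝ w y‖ + η) * ‖x - y‖ := by
        gcongr
        exact (convex_ball y (min δ 1)).norm_image_sub_le_of_norm_fderiv_le (𝕜 := ℝ)
          (fun z _ ↦ hw.differentiable one_ne_zero z) hbound
          (Metric.mem_ball_self (by positivity)) (Metric.mem_ball_comm.1 hy)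
    _ ≤ ‖w y‖ + min δ 1 * (‖fderiv ℝ w y‖ + η) := by
        rw [mul_comm]
        gcongr

variable [FiniteDimensional ℝ E] [MeasurableSpace E] [BorelSpace E] (μ : Measure E)
  [μ.IsAddHaarMeasure]

lemma isoperimetricConst_mul_lintegral_meas_rpow_le_add (hn : 2 ≤ finrank ℝ E)
    (hw : ContDiff ℝ 1 w) (hc : HasCompactSupport w) {η : ℝ} (hη : 0 < η) :
    isoperimetricConst μ *
      ∫⁻ t in Set.Ioi (0 : ℝ), μ {x | ENNReal.ofReal t < ‖w x‖ₑ} ^ (1 - (finrank ℝ E : ℝ)⁻¹) ≤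
      ∫⁻ x, ‖fderiv ℝ w x‖ₑ ∂μ + ENNReal.ofReal η * μ (Metric.cthickening 1 (tsupport w)) := by
  set K := Metric.cthickening 1 (tsupport w)
  have hK : MeasurableSet K := Metric.isClosed_cthickening.measurableSet
  have hwm : Measurable fun x ↦ ‖w x‖ₑ := hw.continuous.enorm.measurable
  have hDm : Measurable fun x ↦ ‖fderiv ℝ w x‖ₑ :=
    (hw.continuous_fderiv one_ne_zero).enorm.measurable
  obtain ⟨ε, hε, hε1, hosc⟩ := exists_forall_norm_le_add_mul_norm_fderiv_add hw hc hη
  set D : E → ℝ≥0∞ := K.indicator fun x ↦ ‖fderiv ℝ w x‖ₑ + ENNReal.ofReal η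
  have hD : Measurable D := (hDm.add_const _).indicator hK
  have hle (x : E) (y : E) (hy : y ∈ Metric.ball x ε) :
      ‖w x‖ₑ ≤ ‖w y‖ₑ + ENNReal.ofReal ε * D y := by
    by_cases hx : x ∈ tsupport w
    · have hyK : y ∈ K :=
        Metric.mem_cthickening_of_dist_le y x 1 _ hx ((Metric.mem_ball.1 hy).le.trans hε1)
      simp only [D, Set.indicator_of_mem hyK, ← ofReal_norm]
      rw [← ENNReal.ofReal_add (norm_nonneg _) hη.le, ← ENNReal.ofReal_mul hε.le,
        ← ENNReal.ofReal_add (norm_nonneg _) (by positivity)]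
      exact ENNReal.ofReal_le_ofReal (hosc x y hy)
    · simp [image_eq_zero_of_notMem_tsupport hx]
  have key := lintegral_add_le_lintegral_of_le_of_mem_ball
    (g := fun y ↦ ‖w y‖ₑ + ENNReal.ofReal ε * D y)
    μ hn hwm (hwm.add (hD.const_mul _)) hε hle
  have hwtop : ∫⁻ x, ‖w x‖ₑ ∂μ ≠ ∞ := (hw.continuous.integrable_of_hasCompactSupport hc).2.ne
  rw [lintegral_add_left hwm, lintegral_const_mul _ hD, ENNReal.add_le_add_iff_left hwtop,
    ENNReal.mul_le_mul_iff_right (by simpa using hε) ENNReal.ofReal_ne_top] at key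
  refine key.trans ?_
  rw [lintegral_indicator hK, lintegral_add_left hDm, setLIntegral_const]
  gcongr
  exact Measure.restrict_le_self

lemma isoperimetricConst_mul_lintegral_meas_rpow_le (hn : 2 ≤ finrank ℝ E)
    (hw : ContDiff ℝ 1 w) (hc : HasCompactSupport w) :
    isoperimetricConst μ *
      ∫⁻ t in Set.Ioi (0 : ℝ), μ {x | ENNReal.ofReal t < ‖w x‖ₑ} ^ (1 - (finrank ℝ E : ℝ)⁻¹) ≤
      ∫⁻ x, ‖fderiv ℝ w x‖ₑ ∂μ := by
  have hKtop : μ (Metric.cthickening 1 (tsupport w)) ≠ ∞ :=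
    hc.isCompact.cthickening.measure_lt_top.ne
  have lim : Tendsto (fun η : ℝ ↦ ∫⁻ x, ‖fderiv ℝ w x‖ₑ ∂μ +
      ENNReal.ofReal η * μ (Metric.cthickening 1 (tsupport w))) (𝓝[>] 0)
      (𝓝 (∫⁻ x, ‖fderiv ℝ w x‖ₑ ∂μ)) := by
    simpa using (tendsto_const_nhds (x := ∫⁻ x, ‖fderiv ℝ w x‖ₑ ∂μ)).add
      (ENNReal.Tendsto.mul_const ((ENNReal.continuous_ofReal.tendsto 0).mono_left
        nhdsWithin_le_nhds) (.inr hKtop))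
  exact ge_of_tendsto lim (eventually_mem_nhdsWithin.mono fun η hη ↦
    isoperimetricConst_mul_lintegral_meas_rpow_le_add μ hn hw hc hη)

theorem isoperimetricConst_mul_eLpNorm_le_lintegral_enorm_fderiv {p : ℝ}
    (hp : (finrank ℝ E : ℝ).HolderConjugate p) (hw : ContDiff ℝ 1 w) (hc : HasCompactSupport w) :
    isoperimetricConst μ * eLpNorm w (ENNReal.ofReal p) μ ≤ ∫⁻ x, ‖fderiv ℝ w x‖ₑ ∂μ := by
  have hp0 : ENNReal.ofReal p ≠ 0 := by simpa using hp.symm.pos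
  have hfin : ∫⁻ x, ‖w x‖ₑ ^ p ∂μ ≠ ∞ := by
    simpa [ENNReal.toReal_ofReal hp.symm.nonneg] using
      (lintegral_rpow_enorm_lt_top_of_eLpNorm_lt_top hp0 ENNReal.ofReal_ne_top
        (hw.continuous.memLp_of_hasCompactSupport (μ := μ) hc).2).ne
  have level := lintegral_rpow_rpow_inv_le_lintegral_meas_rpow hp.symm.lt
    hw.continuous.enorm.measurable hfin
  rw [eLpNorm_eq_lintegral_rpow_enorm_toReal hp0 ENNReal.ofReal_ne_top,
    ENNReal.toReal_ofReal hp.symm.nonneg, one_div]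
  refine (mul_le_mul_right level _).trans ?_
  rw [← hp.one_sub_inv]
  exact isoperimetricConst_mul_lintegral_meas_rpow_le μ (by exact_mod_cast hp.lt) hw hc

end Sobolev

section TestFields

open scoped NNReal

variable {N : ℕ} {ψ : Euc N → Euc N} {η f u : Euc N → ℝ} {T : ℝ}

/-- The divergence of a vector field on `ℝ^N`, in the form in which it enters `TVSet`. -/
def divergence (ψ : Euc N → Euc N) (x : Euc N) : ℝ :=
  ∑ i, fderiv ℝ (fun y ↦ ψ y i) x (EuclideanSpace.single i 1)

lemma continuousLinearMap_apply_eq_sum_single (L : Euc N →L[ℝ] ℝ) (v : Euc N) :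
    L v = ∑ i, L (EuclideanSpace.single i 1) * v i := by
  conv_lhs => rw [← (EuclideanSpace.basisFun (Fin N) ℝ).sum_repr v]
  simp [mul_comm]

lemma divergence_smul (hη : ContDiff ℝ 1 η) (hψ : ContDiff ℝ 1 ψ) (x : Euc N) :
    divergence (fun y ↦ η y • ψ y) x = η x * divergence ψ x + fderiv ℝ η x (ψ x) := by
  unfold divergence
  rw [continuousLinearMap_apply_eq_sum_single (fderiv ℝ η x), Finset.mul_sum,
    ← Finset.sum_add_distrib]
  refine Finset.sum_congr rfl fun i _ ↦ ?_
  simp only [PiLp.smul_apply, smul_eq_mul]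
  rw [fderiv_fun_mul (hη.differentiable one_ne_zero x)
    ((contDiff_euclidean.1 hψ i).differentiable one_ne_zero x)]
  simp [mul_comm]

lemma divergence_comp_add_right (ψ : Euc N → Euc N) (t x : Euc N) :
    divergence (fun y ↦ ψ (y + t)) x = divergence ψ (x + t) :=
  Finset.sum_congr rfl fun i _ ↦ by rw [fderiv_comp_add_right (f := fun y ↦ ψ y i)]

/-- The vector fields tested against in the definition of the total variation: `C¹`, compactly
supported and of pointwise length at most one. -/
structure IsTestField (ψ : Euc N → Euc N) : Prop where
  contDiff : ContDiff ℝ 1 ψ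
  hasCompactSupport : HasCompactSupport ψ
  norm_le_one (x : Euc N) : ‖ψ x‖ ≤ 1

lemma mem_TVSet_iff {r : ℝ} :
    r ∈ TVSet N u ↔ ∃ ψ, IsTestField ψ ∧ r = ∫ x, u x * divergence ψ x :=
  ⟨fun ⟨ψ, h, hc, h1, hr⟩ ↦ ⟨ψ, ⟨h, hc, h1⟩, hr⟩,
    fun ⟨ψ, ⟨h, hc, h1⟩, hr⟩ ↦ ⟨ψ, h, hc, h1, hr⟩⟩

lemma mem_upperBounds_TVSet_iff :
    T ∈ upperBounds (TVSet N u) ↔ ∀ ψ, IsTestField ψ → ∫ x, u x * divergence ψ x ≤ T := by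
  simp only [mem_upperBounds, mem_TVSet_iff]
  exact ⟨fun h ψ hψ ↦ h _ ⟨ψ, hψ, rfl⟩, by rintro h _ ⟨ψ, hψ, rfl⟩; exact h ψ hψ⟩

namespace IsTestField

lemma zero : IsTestField (0 : Euc N → Euc N) :=
  ⟨contDiff_const, HasCompactSupport.zero, by simp⟩

lemma smul (hψ : IsTestField ψ) (hη : ContDiff ℝ 1 η) (hη1 : ∀ x, |η x| ≤ 1) :
    IsTestField fun x ↦ η x • ψ x := by
  refine ⟨hη.smul hψ.contDiff, hψ.hasCompactSupport.smul_left (f := η), fun x ↦ ?_⟩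
  rw [norm_smul]
  exact mul_le_one₀ (hη1 x) (norm_nonneg _) (hψ.norm_le_one x)

lemma comp_add_right (hψ : IsTestField ψ) (t : Euc N) : IsTestField fun x ↦ ψ (x + t) :=
  ⟨hψ.contDiff.comp (contDiff_id.add contDiff_const),
    hψ.hasCompactSupport.comp_homeomorph (Homeomorph.addRight t), fun x ↦ hψ.norm_le_one (x + t)⟩

lemma contDiff_apply (hψ : IsTestField ψ) (i : Fin N) : ContDiff ℝ 1 fun x ↦ ψ x i :=
  contDiff_euclidean.1 hψ.contDiff i

lemma hasCompactSupport_apply (hψ : IsTestField ψ) (i : Fin N) :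
    HasCompactSupport fun x ↦ ψ x i :=
  hψ.hasCompactSupport.comp_left (g := fun v : Euc N ↦ v i) rfl

lemma continuous_fderiv_apply (hψ : IsTestField ψ) (i : Fin N) (v : Euc N) :
    Continuous fun x ↦ fderiv ℝ (fun y ↦ ψ y i) x v :=
  ((hψ.contDiff_apply i).continuous_fderiv one_ne_zero).clm_apply continuous_const

lemma continuous_divergence (hψ : IsTestField ψ) : Continuous (divergence ψ) :=
  continuous_finsetSum _ fun i _ ↦ hψ.continuous_fderiv_apply i _

lemma hasCompactSupport_divergence (hψ : IsTestField ψ) : HasCompactSupport (divergence ψ) :=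
  HasCompactSupport.intro hψ.hasCompactSupport fun x hx ↦ Finset.sum_eq_zero fun i _ ↦ by
    have : x ∉ tsupport fun y ↦ ψ y i :=
      fun h ↦ hx (tsupport_comp_subset (g := fun v : Euc N ↦ v i) rfl ψ h)
    simp [fderiv_of_notMem_tsupport ℝ this]

lemma exists_norm_divergence_le (hψ : IsTestField ψ) : ∃ C, ∀ x, ‖divergence ψ x‖ ≤ C :=
  hψ.hasCompactSupport_divergence.exists_bound_of_continuous hψ.continuous_divergence

lemma integrable_mul_divergence (hψ : IsTestField ψ) (hu : Integrable u) :
    Integrable fun x ↦ u x * divergence ψ x :=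
  let ⟨_, hC⟩ := hψ.exists_norm_divergence_le
  hu.mul_bdd hψ.continuous_divergence.aestronglyMeasurable (.of_forall hC)

lemma norm_clm_apply_le (hψ : IsTestField ψ) (L : Euc N →L[ℝ] ℝ) (x : Euc N) :
    ‖L (ψ x)‖ ≤ ‖L‖ :=
  (L.le_opNorm _).trans (mul_le_of_le_one_right (norm_nonneg _) (hψ.norm_le_one x))

lemma integral_mul_divergence (hψ : IsTestField ψ) {C : ℝ≥0} (hf : LipschitzWith C f) :
    ∫ x, f x * divergence ψ x = -∫ x, fderiv ℝ f x (ψ x) := by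
  have hexpand : (fun x ↦ fderiv ℝ f x (ψ x)) =ᵐ[volume]
      fun x ↦ ∑ i, lineDeriv ℝ f x (EuclideanSpace.single i 1) * ψ x i :=
    hf.ae_differentiableAt.mono fun x hx ↦ by
      simp only [continuousLinearMap_apply_eq_sum_single (fderiv ℝ f x) (ψ x),
        hx.lineDeriv_eq_fderiv]
  have hleft (i : Fin N) : Integrable fun x ↦
      f x * fderiv ℝ (fun y ↦ ψ y i) x (EuclideanSpace.single i 1) :=
    (hf.continuous.mul (hψ.continuous_fderiv_apply i _)).integrable_of_hasCompactSupport
      ((hψ.hasCompactSupport_apply i).fderiv_apply ℝ _).mul_left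
  have hright (i : Fin N) :
      Integrable fun x ↦ lineDeriv ℝ f x (EuclideanSpace.single i 1) * ψ x i :=
    ((hψ.contDiff_apply i).continuous.integrable_of_hasCompactSupport
      (hψ.hasCompactSupport_apply i)).bdd_mul
      (measurable_lineDeriv hf.continuous).aestronglyMeasurable
      (.of_forall fun _ ↦ norm_lineDeriv_le_of_lipschitz ℝ hf)
  rw [integral_congr_ae hexpand, integral_finsetSum _ fun i _ ↦ hright i]
  simp only [divergence, Finset.mul_sum]
  rw [integral_finsetSum _ fun i _ ↦ hleft i, ← Finset.sum_neg_distrib]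
  refine Finset.sum_congr rfl fun i _ ↦ ?_
  obtain ⟨D, hD⟩ := (hψ.contDiff_apply i).lipschitzWith_of_hasCompactSupport
    (hψ.hasCompactSupport_apply i) one_ne_zero
  rw [hf.integral_lineDeriv_mul_eq hD (hψ.hasCompactSupport_apply i), ← integral_neg]
  congr with x
  rw [((hψ.contDiff_apply i).differentiable one_ne_zero x).lineDeriv_eq_fderiv, map_neg]
  ring

end IsTestField

lemma zero_mem_TVSet (u : Euc N → ℝ) : 0 ∈ TVSet N u :=
  mem_TVSet_iff.2 ⟨0, .zero, by simp [divergence]⟩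

lemma MemBV.tv_mem_upperBounds (hu : MemBV N u) : tv N u ∈ upperBounds (TVSet N u) :=
  fun _ hr ↦ le_csSup hu.2 hr

lemma MemBV.tv_nonneg (hu : MemBV N u) : 0 ≤ tv N u :=
  hu.tv_mem_upperBounds (zero_mem_TVSet u)

lemma tv_le_of_mem_upperBounds (hT : T ∈ upperBounds (TVSet N u)) : tv N u ≤ T :=
  csSup_le ⟨0, zero_mem_TVSet u⟩ hT

end TestFields

section SmoothFunctions

open scoped ENNReal Gradient RealInnerProductSpace
open OpenPartialHomeomorph (univUnitBall univUnitBall_apply univUnitBall_apply_zero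
  contDiff_univUnitBall)

lemma norm_univUnitBall_lt_one {V : Type*} [NormedAddCommGroup V] [NormedSpace ℝ V] (v : V) :
    ‖univUnitBall v‖ < 1 :=
  mem_ball_zero_iff.1 (univUnitBall.map_source (Set.mem_univ v))

lemma norm_sub_one_le_inner_univUnitBall {V : Type*} [NormedAddCommGroup V]
    [InnerProductSpace ℝ V] (v : V) : ‖v‖ - 1 ≤ ⟪v, univUnitBall v⟫ := by
  have hsqrt : √(1 + ‖v‖ ^ 2) ≤ 1 + ‖v‖ :=
    Real.sqrt_le_iff.2 ⟨by positivity, by nlinarith [norm_nonneg v]⟩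
  rw [univUnitBall_apply, inner_smul_right, real_inner_self_eq_norm_sq, inv_mul_eq_div,
    le_div_iff₀ (by positivity)]
  obtain h | h := le_total ‖v‖ 1
  · exact (mul_nonpos_of_nonpos_of_nonneg (sub_nonpos.2 h) (Real.sqrt_nonneg _)).trans
      (sq_nonneg _)
  · calc (‖v‖ - 1) * √(1 + ‖v‖ ^ 2) ≤ (‖v‖ - 1) * (1 + ‖v‖) := by gcongr
      _ ≤ ‖v‖ ^ 2 := by linarith

variable {N : ℕ} {w : Euc N → ℝ} {T : ℝ}

lemma norm_gradient_eq_norm_fderiv (w : Euc N → ℝ) (x : Euc N) : ‖∇ w x‖ = ‖fderiv ℝ w x‖ := by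
  simp [gradient]

lemma isTestField_univUnitBall_smul_gradient (hw : ContDiff ℝ 2 w) (hc : HasCompactSupport w)
    (s : ℝ) : IsTestField fun x ↦ univUnitBall (s • ∇ w x) := by
  have hgrad : ContDiff ℝ 1 (∇ w) :=
    (InnerProductSpace.toDual ℝ (Euc N)).symm.contDiff.comp (hw.fderiv_right (by norm_num))
  exact ⟨contDiff_univUnitBall.comp (hgrad.const_smul s), (hc.fderiv ℝ).comp_left
    (g := fun L ↦ univUnitBall (s • (InnerProductSpace.toDual ℝ (Euc N)).symm L)) (by simp),
    fun x ↦ (norm_univUnitBall_lt_one _).le⟩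

/- Testing against a smoothed version of the unit field `-∇w / ‖∇w‖`. -/
lemma integral_norm_fderiv_le_add (hw : ContDiff ℝ 2 w) (hc : HasCompactSupport w)
    (hT : T ∈ upperBounds (TVSet N w)) {δ : ℝ} (hδ : 0 < δ) :
    ∫ x, ‖fderiv ℝ w x‖ ≤ T + δ * volume.real (tsupport w) := by
  have hw1 : ContDiff ℝ 1 w := hw.of_le (by norm_num)
  have hψ : IsTestField fun x ↦ -univUnitBall (δ⁻¹ • ∇ w x) := by
    simpa using (isTestField_univUnitBall_smul_gradient hw hc δ⁻¹).smul
      (contDiff_const (c := (-1 : ℝ))) (by simp)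
  obtain ⟨C, hC⟩ := hw1.lipschitzWith_of_hasCompactSupport hc one_ne_zero
  have htest := mem_upperBounds_TVSet_iff.1 hT _ hψ
  rw [hψ.integral_mul_divergence hC, ← integral_neg] at htest
  have hK : MeasurableSet (tsupport w) := (isClosed_tsupport w).measurableSet
  have hDw : Continuous (fderiv ℝ w) := hw1.continuous_fderiv one_ne_zero
  have hDwc : HasCompactSupport (fderiv ℝ w) := hc.fderiv ℝ
  have hint : Integrable fun x ↦ -fderiv ℝ w x (-univUnitBall (δ⁻¹ • ∇ w x)) :=
    ((hDw.integrable_of_hasCompactSupport hDwc).norm.mono'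
      (hDw.clm_apply hψ.contDiff.continuous).aestronglyMeasurable
      (.of_forall fun x ↦ hψ.norm_clm_apply_le _ x)).neg
  have hpointwise (x : Euc N) : ‖fderiv ℝ w x‖ ≤
      -fderiv ℝ w x (-univUnitBall (δ⁻¹ • ∇ w x)) + (tsupport w).indicator (fun _ ↦ δ) x := by
    by_cases hx : x ∈ tsupport w
    · have h := norm_sub_one_le_inner_univUnitBall (δ⁻¹ • ∇ w x)
      rw [norm_smul, norm_gradient_eq_norm_fderiv, real_inner_smul_left, inner_gradient_left,
        Real.norm_of_nonneg (by positivity), sub_le_iff_le_add, inv_mul_le_iff₀ hδ, mul_add,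
        mul_inv_cancel_left₀ hδ.ne', mul_one] at h
      rwa [Set.indicator_of_mem hx, map_neg, neg_neg]
    · simp [Set.indicator_of_notMem hx, fderiv_of_notMem_tsupport ℝ hx]
  have hδK : Integrable ((tsupport w).indicator fun _ ↦ δ) :=
    (integrable_indicator_iff hK).2 (integrableOn_const hc.isCompact.measure_lt_top.ne)
  calc ∫ x, ‖fderiv ℝ w x‖
      ≤ ∫ x, (-fderiv ℝ w x (-univUnitBall (δ⁻¹ • ∇ w x)) +
          (tsupport w).indicator (fun _ ↦ δ) x) :=
        integral_mono (hDw.integrable_of_hasCompactSupport hDwc).norm (hint.add hδK) hpointwise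
    _ ≤ T + δ * volume.real (tsupport w) := by
        rw [integral_add hint hδK, integral_indicator_const _ hK, smul_eq_mul, mul_comm]
        gcongr

lemma lintegral_enorm_fderiv_le_of_mem_upperBounds (hw : ContDiff ℝ 2 w)
    (hc : HasCompactSupport w) (hT : T ∈ upperBounds (TVSet N w)) :
    ∫⁻ x, ‖fderiv ℝ w x‖ₑ ≤ ENNReal.ofReal T := by
  have hint : Integrable (fderiv ℝ w) :=
    (hw.continuous_fderiv two_ne_zero).integrable_of_hasCompactSupport (hc.fderiv ℝ)
  have lim : Tendsto (fun δ : ℝ ↦ T + δ * volume.real (tsupport w)) (𝓝[>] 0) (𝓝 T) := by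
    have : Continuous fun δ : ℝ ↦ T + δ * volume.real (tsupport w) := by fun_prop
    simpa using (this.tendsto 0).mono_left nhdsWithin_le_nhds
  rw [← ofReal_integral_norm_eq_lintegral_enorm hint]
  exact ENNReal.ofReal_le_ofReal (ge_of_tendsto lim
    (eventually_mem_nhdsWithin.mono fun δ hδ ↦ integral_norm_fderiv_le_add hw hc hT hδ))

end SmoothFunctions

section LowerSemicontinuity

open scoped ENNReal

lemma mul_eLpNorm_le_of_tendsto_ae {α F : Type*} [MeasurableSpace α] [NormedAddCommGroup F]
    {μ : Measure α} {f : ℕ → α → F} {g : α → F} {c p C : ℝ≥0∞} {B : ℕ → ℝ≥0∞}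
    (hf : ∀ n, AEStronglyMeasurable (f n) μ)
    (hlim : ∀ᵐ x ∂μ, Tendsto (fun n ↦ f n x) atTop (𝓝 (g x))) (hB : Tendsto B atTop (𝓝 C))
    (h : ∀ n, c * eLpNorm (f n) p μ ≤ B n) : c * eLpNorm g p μ ≤ C :=
  calc c * eLpNorm g p μ ≤ c * liminf (fun n ↦ eLpNorm (f n) p μ) atTop := by
        gcongr
        exact Lp.eLpNorm_lim_le_liminf_eLpNorm hf g hlim
    _ ≤ liminf (fun n ↦ c * eLpNorm (f n) p μ) atTop := by
        simpa [Pi.mul_def] using ENNReal.le_liminf_mul (f := atTop) (u := fun _ ↦ c)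
          (v := fun n ↦ eLpNorm (f n) p μ)
    _ ≤ liminf B atTop := liminf_le_liminf (.of_forall h)
    _ = C := hB.liminf_eq

end LowerSemicontinuity

section SobolevBV

open scoped ENNReal Convolution
open ContinuousLinearMap (lsmul)
open Module (finrank)

variable {N : ℕ} {u v η ρ : Euc N → ℝ} {T : ℝ}

lemma add_mul_mem_upperBounds_TVSet_mul (hu : Integrable u) (hT : T ∈ upperBounds (TVSet N u))
    (hη : ContDiff ℝ 1 η) (hη1 : ∀ x, |η x| ≤ 1) {L : ℝ} (hL : ∀ x, ‖fderiv ℝ η x‖ ≤ L) :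
    T + L * ∫ x, |u x| ∈ upperBounds (TVSet N fun x ↦ η x * u x) := by
  refine mem_upperBounds_TVSet_iff.2 fun ψ hψ ↦ ?_
  have hηψ := hψ.smul hη hη1
  have hbound (x : Euc N) : ‖fderiv ℝ η x (ψ x)‖ ≤ L := (hψ.norm_clm_apply_le _ x).trans (hL x)
  have hint : Integrable fun x ↦ u x * fderiv ℝ η x (ψ x) :=
    hu.mul_bdd ((hη.continuous_fderiv one_ne_zero).clm_apply
      hψ.contDiff.continuous).aestronglyMeasurable (.of_forall hbound)
  have hsplit (x : Euc N) : η x * u x * divergence ψ x =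
      u x * divergence (fun y ↦ η y • ψ y) x + -(u x * fderiv ℝ η x (ψ x)) := by
    rw [divergence_smul hη hψ.contDiff]
    ring
  simp only [hsplit]
  rw [integral_add (hηψ.integrable_mul_divergence hu) (by exact hint.neg)]
  gcongr
  · exact mem_upperBounds_TVSet_iff.1 hT _ hηψ
  · rw [← integral_const_mul]
    refine integral_mono hint.neg (hu.abs.const_mul L) fun x ↦ ?_
    calc -(u x * fderiv ℝ η x (ψ x)) ≤ |u x * fderiv ℝ η x (ψ x)| := neg_le_abs _
      _ = |fderiv ℝ η x (ψ x)| * |u x| := by rw [abs_mul, mul_comm]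
      _ ≤ L * |u x| := by gcongr; exact hbound x

lemma mem_upperBounds_TVSet_convolution (hv : Integrable v) (hT : T ∈ upperBounds (TVSet N v))
    (hρ : Integrable ρ) (hρ0 : 0 ≤ ρ) (hρ1 : ∫ x, ρ x = 1) :
    T ∈ upperBounds (TVSet N (ρ ⋆[lsmul ℝ ℝ, volume] v)) := by
  refine mem_upperBounds_TVSet_iff.2 fun ψ hψ ↦ ?_
  obtain ⟨C, hC⟩ := hψ.exists_norm_divergence_le
  have hint : Integrable (fun p : Euc N × Euc N ↦ ρ p.2 * v (p.1 - p.2) * divergence ψ p.1)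
      (volume.prod volume) :=
    (hρ.convolution_integrand (lsmul ℝ ℝ) hv).mul_bdd
      (hψ.continuous_divergence.comp continuous_fst).aestronglyMeasurable
      (.of_forall fun p ↦ hC p.1)
  have htranslate (t : Euc N) : ∫ x, ρ t * v (x - t) * divergence ψ x =
      ρ t * ∫ x, v x * divergence (fun y ↦ ψ (y + t)) x := by
    rw [← integral_const_mul,
      ← integral_add_right_eq_self (fun x ↦ ρ t * v (x - t) * divergence ψ x) t]
    simp only [add_sub_cancel_right, divergence_comp_add_right, mul_assoc]
  calc ∫ x, (ρ ⋆[lsmul ℝ ℝ, volume] v) x * divergence ψ x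
      = ∫ x, ∫ t, ρ t * v (x - t) * divergence ψ x := by
        simp only [convolution, ContinuousLinearMap.lsmul_apply, smul_eq_mul, integral_mul_const]
    _ = ∫ t, ∫ x, ρ t * v (x - t) * divergence ψ x := integral_integral_swap hint
    _ ≤ ∫ t, ρ t * T := by
        refine integral_mono hint.integral_prod_right (hρ.mul_const T) fun t ↦ ?_
        rw [htranslate]
        exact mul_le_mul_of_nonneg_left
          (mem_upperBounds_TVSet_iff.1 hT _ (hψ.comp_add_right t)) (hρ0 t)
    _ = T := by rw [integral_mul_const, hρ1, one_mul]

variable {p : ℝ}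

lemma isoperimetricConst_mul_eLpNorm_le_of_hasCompactSupport (hp : (N : ℝ).HolderConjugate p)
    (hv : Integrable v) (hc : HasCompactSupport v) (hT : T ∈ upperBounds (TVSet N v)) :
    isoperimetricConst (volume : Measure (Euc N)) * eLpNorm v (ENNReal.ofReal p) volume ≤
      ENNReal.ofReal T := by
  let φ (k : ℕ) : ContDiffBump (0 : Euc N) :=
    { rIn := 1 / ((k : ℝ) + 1), rOut := 2 * (1 / ((k : ℝ) + 1)), rIn_pos := by positivity,
      rIn_lt_rOut := lt_two_mul_self (by positivity) }
  have hφ : Tendsto (fun k ↦ (φ k).rOut) atTop (𝓝 0) := by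
    simpa [φ] using (tendsto_one_div_add_atTop_nhds_zero_nat (𝕜 := ℝ)).const_mul 2
  have hsmooth (k : ℕ) : ContDiff ℝ 2 ((φ k).normed volume ⋆[lsmul ℝ ℝ, volume] v) :=
    (φ k).hasCompactSupport_normed.contDiff_convolution_left _ (φ k).contDiff_normed
      hv.locallyIntegrable
  refine mul_eLpNorm_le_of_tendsto_ae
    (fun k ↦ (hsmooth k).continuous.aestronglyMeasurable)
    (ContDiffBump.ae_convolution_tendsto_right_of_locallyIntegrable hφ
      (.of_forall fun _ ↦ le_rfl) hv.locallyIntegrable)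
    tendsto_const_nhds fun k ↦ ?_
  have hcs : HasCompactSupport ((φ k).normed volume ⋆[lsmul ℝ ℝ, volume] v) :=
    HasCompactSupport.convolution _ (φ k).hasCompactSupport_normed hc
  exact (isoperimetricConst_mul_eLpNorm_le_lintegral_enorm_fderiv volume (by simpa using hp)
    ((hsmooth k).of_le one_le_two) hcs).trans
    (lintegral_enorm_fderiv_le_of_mem_upperBounds (hsmooth k) hcs
      (mem_upperBounds_TVSet_convolution hv hT (φ k).integrable_normed (φ k).nonneg_normed
        (φ k).integral_normed))

lemma exists_contDiff_cutoff (N : ℕ) : ∃ (η : ℕ → Euc N → ℝ) (C : ℝ),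
    (∀ k, ContDiff ℝ 1 (η k)) ∧ (∀ k, HasCompactSupport (η k)) ∧ (∀ k x, |η k x| ≤ 1) ∧
    (∀ k x, ‖fderiv ℝ (η k) x‖ ≤ 1 / ((k : ℝ) + 1) * C) ∧
    ∀ x, ∀ᶠ k in atTop, η k x = 1 := by
  let χ : ContDiffBump (0 : Euc N) := ⟨1, 2, one_pos, one_lt_two⟩
  have hχ : ContDiff ℝ 1 χ := χ.contDiff
  obtain ⟨C, hC⟩ := (χ.hasCompactSupport.fderiv ℝ).exists_bound_of_continuous
    (hχ.continuous_fderiv one_ne_zero)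
  have hpos (k : ℕ) : 0 < 1 / ((k : ℝ) + 1) := by positivity
  refine ⟨fun k x ↦ χ ((1 / ((k : ℝ) + 1)) • x), C, fun k ↦ hχ.comp (contDiff_const_smul _),
    fun k ↦ χ.hasCompactSupport.comp_smul (hpos k).ne', fun k x ↦ ?_, fun k x ↦ ?_, fun x ↦ ?_⟩
  · exact (abs_of_nonneg χ.nonneg).trans_le χ.le_one
  · rw [fderiv_comp_smul, norm_smul, Real.norm_of_nonneg (hpos k).le]
    exact mul_le_mul_of_nonneg_left (hC _) (hpos k).le
  · filter_upwards [tendsto_natCast_atTop_atTop.eventually_ge_atTop ‖x‖] with k hk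
    refine χ.one_of_mem_closedBall (mem_closedBall_zero_iff.2 ?_)
    rw [norm_smul, Real.norm_of_nonneg (hpos k).le, one_div, inv_mul_le_iff₀ (by positivity)]
    change ‖x‖ ≤ (k + 1) * 1
    linarith

theorem isoperimetricConst_mul_eLpNorm_le (hp : (N : ℝ).HolderConjugate p) (hu : Integrable u)
    (hT : T ∈ upperBounds (TVSet N u)) :
    isoperimetricConst (volume : Measure (Euc N)) * eLpNorm u (ENNReal.ofReal p) volume ≤
      ENNReal.ofReal T := by
  obtain ⟨η, C, hη, hηc, hη1, hηD, hlim⟩ := exists_contDiff_cutoff N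
  have hint (k : ℕ) : Integrable fun x ↦ η k x * u x :=
    hu.bdd_mul (hη k).continuous.aestronglyMeasurable (.of_forall (hη1 k))
  have hB : Tendsto (fun k : ℕ ↦ T + 1 / ((k : ℝ) + 1) * C * ∫ x, |u x|) atTop (𝓝 T) := by
    simpa using ((tendsto_one_div_add_atTop_nhds_zero_nat (𝕜 := ℝ)).mul_const C).mul_const
      (∫ x, |u x|) |>.const_add T
  refine mul_eLpNorm_le_of_tendsto_ae
    (fun k ↦ (hint k).aestronglyMeasurable) (.of_forall fun x ↦ ?_)
    ((ENNReal.continuous_ofReal.tendsto T).comp hB) fun k ↦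
      isoperimetricConst_mul_eLpNorm_le_of_hasCompactSupport hp (hint k) (hηc k).mul_right
        (add_mul_mem_upperBounds_TVSet_mul hu hT (hη k) (hη1 k) (hηD k))
  exact tendsto_const_nhds.congr' ((hlim x).mono fun k hk ↦ by simp [hk])

end SobolevBV

section BallPerimeter

variable {N : ℕ} {ψ : Euc N → Euc N} {A : Set (Euc N)} {C R c δ : ℝ}

lemma norm_integral_le_of_forall_notMem_eq_zero {α E : Type*} [MeasurableSpace α]
    [NormedAddCommGroup E] [NormedSpace ℝ E] {μ : Measure α} {s : Set α} {g : α → E}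
    (hs : μ s ≠ ⊤) (hg : ∀ x, ‖g x‖ ≤ C) (hg0 : ∀ x ∉ s, g x = 0) :
    ‖∫ x, g x ∂μ‖ ≤ C * μ.real s := by
  rw [← setIntegral_eq_integral_of_forall_compl_eq_zero hg0]
  exact norm_setIntegral_le_of_norm_le_const hs.lt_top fun x _ ↦ hg x

lemma fderiv_thickenedIndicator_eq_zero {E : Type*} [NormedAddCommGroup E] [NormedSpace ℝ E]
    {s : Set E} {x : E} (hδ : 0 < δ) (hx : x ∉ Metric.thickening δ s \ s) :
    fderiv ℝ (fun y ↦ (thickenedIndicator hδ s y : ℝ)) x = 0 := by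
  by_cases hxs : x ∈ s
  · refine IsLocalMax.fderiv_eq_zero (.of_forall fun y ↦ ?_)
    simp only [thickenedIndicator_one hδ s hxs]
    exact_mod_cast thickenedIndicator_le_one hδ s y
  · refine IsLocalMin.fderiv_eq_zero (.of_forall fun y ↦ ?_)
    simp only [thickenedIndicator_zero hδ s fun h ↦ hx ⟨h, hxs⟩]
    exact NNReal.coe_nonneg _

lemma norm_setIntegral_sub_integral_thickenedIndicator_mul_le {E : Type*} [MeasurableSpace E]
    [PseudoEMetricSpace E] [OpensMeasurableSpace E] {μ : Measure E} {s : Set E} {g : E → ℝ}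
    (hs : MeasurableSet s) (hδ : 0 < δ) (hfin : μ (Metric.thickening δ s) ≠ ⊤)
    (hg : Integrable g μ) (hC : ∀ x, ‖g x‖ ≤ C) :
    ‖∫ x in s, g x ∂μ - ∫ x, (thickenedIndicator hδ s x : ℝ) * g x ∂μ‖
      ≤ C * μ.real (Metric.thickening δ s \ s) := by
  have h_le (x) : (thickenedIndicator hδ s x : ℝ) ≤ 1 := by
    exact_mod_cast thickenedIndicator_le_one hδ s x
  have h_int : Integrable (fun x ↦ (thickenedIndicator hδ s x : ℝ) * g x) μ := by
    refine hg.bdd_mul (c := 1) ?_ (.of_forall fun x ↦ by simpa using h_le x)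
    exact (NNReal.continuous_coe.comp (thickenedIndicator hδ s).continuous).aestronglyMeasurable
  rw [← integral_indicator hs, ← integral_sub (hg.indicator hs) h_int]
  refine norm_integral_le_of_forall_notMem_eq_zero
    (measure_ne_top_of_subset Set.sdiff_subset hfin) (fun x ↦ ?_) fun x hx ↦ ?_
  all_goals by_cases hxs : x ∈ s
  · rw [Set.indicator_of_mem hxs, thickenedIndicator_one hδ s hxs]
    simpa using (norm_nonneg _).trans (hC x)
  · rw [Set.indicator_of_notMem hxs, zero_sub, norm_neg, norm_mul]
    exact (mul_le_of_le_one_left (norm_nonneg _) (by simpa using h_le x)).trans (hC x)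
  · rw [Set.indicator_of_mem hxs, thickenedIndicator_one hδ s hxs]
    simp
  · rw [Set.indicator_of_notMem hxs, thickenedIndicator_zero hδ s fun h ↦ hx ⟨h, hxs⟩]
    simp

/- Replace the indicator of `A` by a `δ⁻¹`-Lipschitz cutoff and integrate by parts: the gradient of
the cutoff, and the error made in the replacement, live on the collar of width `δ` around `A`. -/
lemma setIntegral_divergence_le (hψ : IsTestField ψ) (hA : MeasurableSet A) (hδ : 0 < δ)
    (hfin : volume (Metric.thickening δ A) ≠ ⊤) (hC : ∀ x, ‖divergence ψ x‖ ≤ C) :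
    ∫ x in A, divergence ψ x ≤ (δ⁻¹ + C) * volume.real (Metric.thickening δ A \ A) := by
  have h_lip : LipschitzWith δ.toNNReal⁻¹ fun x ↦ (thickenedIndicator hδ A x : ℝ) :=
    lipschitzWith_thickenedIndicator hδ A
  have h_grad : ‖∫ x, fderiv ℝ (fun y ↦ (thickenedIndicator hδ A y : ℝ)) x (ψ x)‖
      ≤ δ⁻¹ * volume.real (Metric.thickening δ A \ A) := by
    refine norm_integral_le_of_forall_notMem_eq_zero
      (measure_ne_top_of_subset Set.sdiff_subset hfin) (fun x ↦ ?_) fun x hx ↦ ?_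
    · refine (hψ.norm_clm_apply_le _ x).trans ((norm_fderiv_le_of_lipschitz ℝ h_lip).trans_eq ?_)
      simp [hδ.le]
    · rw [fderiv_thickenedIndicator_eq_zero hδ hx, zero_apply]
  have h_replace := norm_setIntegral_sub_integral_thickenedIndicator_mul_le hA hδ hfin
    (hψ.continuous_divergence.integrable_of_hasCompactSupport hψ.hasCompactSupport_divergence) hC
  rw [hψ.integral_mul_divergence h_lip, Real.norm_eq_abs] at h_replace
  linarith [le_of_abs_le h_replace, neg_le_of_abs_le h_grad]

lemma measureReal_ball_zero_eq (hR : 0 < R) :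
    volume.real (Metric.ball (0 : Euc N) R) = volume.real (Metric.ball (0 : Euc N) 1) * R ^ N := by
  rw [measureReal_def, Measure.addHaar_ball_of_pos _ _ hR, finrank_euclideanSpace_fin,
    ENNReal.toReal_mul, ENNReal.toReal_ofReal (by positivity), mul_comm, measureReal_def]

lemma setIntegral_ball_divergence_le (hψ : IsTestField ψ) (hR : 0 < R) :
    ∫ x in Metric.ball 0 R, divergence ψ x ≤ omegaS N * R ^ (N - 1) := by
  obtain ⟨C, hC⟩ := hψ.exists_norm_divergence_le
  set β := volume.real (Metric.ball (0 : Euc N) 1)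
  have h_collar {δ : ℝ} (hδ : 0 < δ) :
      ∫ x in Metric.ball 0 R, divergence ψ x ≤ (δ⁻¹ + C) * (β * ((R + δ) ^ N - R ^ N)) := by
    have h := setIntegral_divergence_le hψ (A := Metric.ball 0 R) measurableSet_ball hδ (C := C)
    rw [thickening_ball hδ hR, measureReal_sdiff (Metric.ball_subset_ball (by linarith))
      measurableSet_ball, measureReal_ball_zero_eq hR, measureReal_ball_zero_eq (by positivity),
      add_comm δ] at h
    exact (h measure_ball_lt_top.ne hC).trans_eq (by ring)
  have h_slope : Tendsto (fun δ : ℝ ↦ δ⁻¹ * ((R + δ) ^ N - R ^ N)) (𝓝[>] 0)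
      (𝓝 (N * R ^ (N - 1))) := by
    simpa using (hasDerivAt_pow N R).tendsto_slope_zero_right
  have h_diff : Tendsto (fun δ : ℝ ↦ (R + δ) ^ N - R ^ N) (𝓝[>] 0) (𝓝 0) :=
    tendsto_nhdsWithin_of_tendsto_nhds <|
      (by fun_prop : Continuous fun δ : ℝ ↦ (R + δ) ^ N - R ^ N).tendsto' 0 0 (by simp)
  have h_lim : Tendsto (fun δ : ℝ ↦ (δ⁻¹ + C) * (β * ((R + δ) ^ N - R ^ N))) (𝓝[>] 0)
      (𝓝 (omegaS N * R ^ (N - 1))) := by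
    convert (h_slope.add (h_diff.const_mul C)).const_mul β using 2
    · ring
    · rw [omegaS, ← measureReal_def]; ring
  exact ge_of_tendsto h_lim (eventually_mem_nhdsWithin.mono fun δ hδ ↦ h_collar hδ)

lemma mem_upperBounds_TVSet_indicator_ball (hR : 0 < R) (hc : 0 ≤ c) :
    c * (omegaS N * R ^ (N - 1)) ∈
      upperBounds (TVSet N ((Metric.ball 0 R).indicator fun _ ↦ c)) := by
  refine mem_upperBounds_TVSet_iff.2 fun ψ hψ ↦ ?_
  simp_rw [← Set.indicator_mul_left]
  rw [integral_indicator measurableSet_ball, integral_const_mul]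
  exact mul_le_mul_of_nonneg_left (setIntegral_ball_divergence_le hψ hR) hc

end BallPerimeter

section GagliardoNirenberg

open scoped ENNReal

variable {N : ℕ} {p q T : ℝ} {u : Euc N → ℝ}

lemma eLpNorm_rpow_toReal {α E : Type*} [MeasurableSpace α] {μ : Measure α}
    [NormedAddCommGroup E] (hp : 0 < p) (f : α → E) :
    eLpNorm f (ENNReal.ofReal p) μ ^ p = ∫⁻ x, ‖f x‖ₑ ^ p ∂μ := by
  rw [eLpNorm_eq_lintegral_rpow_enorm_toReal (by simpa using hp) ENNReal.ofReal_ne_top,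
    ENNReal.toReal_ofReal hp.le, ← ENNReal.rpow_mul, one_div_mul_cancel hp.ne', ENNReal.rpow_one]

lemma sub_one_mul_le_of_holderConjugate {r : ℝ} (hp : r.HolderConjugate p) (hqp : q ≤ p) :
    (q - 1) * r ≤ q := by
  nlinarith [hp.mul_eq_add, mul_nonneg (sub_nonneg.2 hqp) hp.sub_one_pos.le]

lemma eLpNorm_rpow_le_of_holderConjugate {α E : Type*} [MeasurableSpace α] {μ : Measure α}
    [NormedAddCommGroup E] {f : α → E} {r : ℝ} (hf : AEStronglyMeasurable f μ)
    (hp : r.HolderConjugate p) (hq : 1 ≤ q) (hqp : q ≤ p) :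
    eLpNorm f (ENNReal.ofReal q) μ ^ q ≤
      eLpNorm f 1 μ ^ (q - (q - 1) * r) * eLpNorm f (ENNReal.ofReal p) μ ^ ((q - 1) * r) := by
  have hr : (r - 1) * p = r := hp.sub_one_mul_conj
  have h_nonneg : 0 ≤ q - (q - 1) * r := sub_nonneg.2 (sub_one_mul_le_of_holderConjugate hp hqp)
  have h_nonneg' : 0 ≤ (q - 1) * (r - 1) := mul_nonneg (by linarith) hp.sub_one_pos.le
  calc eLpNorm f (ENNReal.ofReal q) μ ^ q
      = ∫⁻ x, ‖f x‖ₑ ^ (q - (q - 1) * r) * (‖f x‖ₑ ^ p) ^ ((q - 1) * (r - 1)) ∂μ := by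
        rw [eLpNorm_rpow_toReal (by linarith)]
        refine lintegral_congr fun x ↦ ?_
        rw [← ENNReal.rpow_mul, ← ENNReal.rpow_add_of_nonneg _ _ h_nonneg
          (mul_nonneg hp.symm.nonneg h_nonneg')]
        congr 1
        linear_combination -(q - 1) * hr
    _ ≤ (∫⁻ x, ‖f x‖ₑ ∂μ) ^ (q - (q - 1) * r) *
          (∫⁻ x, ‖f x‖ₑ ^ p ∂μ) ^ ((q - 1) * (r - 1)) :=
        ENNReal.lintegral_mul_norm_pow_le hf.enorm (hf.enorm.pow_const p) h_nonneg h_nonneg'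
          (by ring)
    _ = eLpNorm f 1 μ ^ (q - (q - 1) * r) * eLpNorm f (ENNReal.ofReal p) μ ^ ((q - 1) * r) := by
        rw [← eLpNorm_rpow_toReal hp.symm.pos, ← ENNReal.rpow_mul, eLpNorm_one_eq_lintegral_enorm]
        congr 2
        linear_combination (q - 1) * hr

lemma measureReal_ball_zero_one_pos (N : ℕ) : 0 < volume.real (Metric.ball (0 : Euc N) 1) :=
  ENNReal.toReal_pos (Metric.measure_ball_pos _ _ one_pos).ne' measure_ball_lt_top.ne

lemma pow_mul_omegaS_pos (hN : N ≠ 0) : 0 < (N : ℝ) ^ (N - 1) * omegaS N := by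
  have := measureReal_ball_zero_one_pos N
  rw [omegaS, ← measureReal_def]
  positivity

lemma toReal_isoperimetricConst_pow (hN : N ≠ 0) :
    (isoperimetricConst (volume : Measure (Euc N))).toReal ^ N = (N : ℝ) ^ (N - 1) * omegaS N := by
  rw [isoperimetricConst, finrank_euclideanSpace_fin, ENNReal.toReal_mul, ← ENNReal.toReal_rpow,
    ENNReal.toReal_natCast, omegaS, mul_pow, Real.rpow_inv_natCast_pow ENNReal.toReal_nonneg hN,
    ← mul_assoc, ← pow_succ, Nat.sub_add_cancel (Nat.pos_of_ne_zero hN)]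

lemma toReal_isoperimetricConst_rpow (hN : N ≠ 0) (s : ℝ) :
    (isoperimetricConst (volume : Measure (Euc N))).toReal ^ (s * N) =
      ((N : ℝ) ^ (N - 1) * omegaS N) ^ s := by
  rw [mul_comm, Real.rpow_natCast_mul ENNReal.toReal_nonneg, toReal_isoperimetricConst_pow hN]

lemma ne_zero_of_holderConjugate (hp : (N : ℝ).HolderConjugate p) : N ≠ 0 := by
  rintro rfl
  exact hp.ne_zero Nat.cast_zero

namespace MemBV

lemma memLp_holderConjugate (hu : MemBV N u) (hp : (N : ℝ).HolderConjugate p) :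
    MemLp u (ENNReal.ofReal p) := by
  have : NeZero N := ⟨ne_zero_of_holderConjugate hp⟩
  refine ⟨hu.1.1, ?_⟩
  have h := isoperimetricConst_mul_eLpNorm_le hp hu.1 hu.tv_mem_upperBounds
  exact ENNReal.lt_top_of_mul_ne_top_right (ne_top_of_le_ne_top ENNReal.ofReal_ne_top h)
    (isoperimetricConst_ne_zero _)

theorem toReal_isoperimetricConst_mul_nrmq_le (hu : MemBV N u) (hp : (N : ℝ).HolderConjugate p) :
    (isoperimetricConst (volume : Measure (Euc N))).toReal * nrmq N p u ≤ tv N u := by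
  rw [nrmq, ← ENNReal.toReal_mul, ← ENNReal.toReal_ofReal hu.tv_nonneg]
  exact ENNReal.toReal_mono ENNReal.ofReal_ne_top
    (isoperimetricConst_mul_eLpNorm_le hp hu.1 hu.tv_mem_upperBounds)

lemma eLpNorm_one_rpow_mul_eLpNorm_rpow_ne_top (hu : MemBV N u) (hp : (N : ℝ).HolderConjugate p)
    (hq : 1 ≤ q) (hqp : q ≤ p) :
    eLpNorm u 1 volume ^ (q - (q - 1) * N) *
      eLpNorm u (ENNReal.ofReal p) volume ^ ((q - 1) * (N : ℝ)) ≠ ∞ :=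
  ENNReal.mul_ne_top
    (ENNReal.rpow_ne_top_of_nonneg (sub_nonneg.2 (sub_one_mul_le_of_holderConjugate hp hqp))
      (memLp_one_iff_integrable.2 hu.1).eLpNorm_ne_top)
    (ENNReal.rpow_ne_top_of_nonneg (mul_nonneg (by linarith) N.cast_nonneg)
      (hu.memLp_holderConjugate hp).eLpNorm_ne_top)

lemma memLp (hu : MemBV N u) (hp : (N : ℝ).HolderConjugate p) (hq : 1 ≤ q) (hqp : q ≤ p) :
    MemLp u (ENNReal.ofReal q) := by
  refine ⟨hu.1.1, (ENNReal.rpow_lt_top_iff_of_pos (by linarith : 0 < q)).1 ?_⟩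
  exact (eLpNorm_rpow_le_of_holderConjugate hu.1.1 hp hq hqp).trans_lt
    (hu.eLpNorm_one_rpow_mul_eLpNorm_rpow_ne_top hp hq hqp).lt_top

lemma nrmq_rpow_le (hu : MemBV N u) (hp : (N : ℝ).HolderConjugate p) (hq : 1 ≤ q)
    (hqp : q ≤ p) :
    nrmq N q u ^ q ≤ nrm1 N u ^ (q - (q - 1) * N) * nrmq N p u ^ ((q - 1) * N) := by
  simp only [nrmq, nrm1, ENNReal.toReal_rpow, ← ENNReal.toReal_mul]
  exact ENNReal.toReal_mono (hu.eLpNorm_one_rpow_mul_eLpNorm_rpow_ne_top hp hq hqp)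
    (eLpNorm_rpow_le_of_holderConjugate hu.1.1 hp hq hqp)

theorem mul_nrmq_rpow_le (hu : MemBV N u) (hp : (N : ℝ).HolderConjugate p) (hq : 1 ≤ q)
    (hqp : q ≤ p) :
    ((N : ℝ) ^ (N - 1) * omegaS N) ^ (q - 1) * nrmq N q u ^ q ≤
      nrm1 N u ^ (q - (q - 1) * N) * tv N u ^ ((q - 1) * N) := by
  set κ := (isoperimetricConst (volume : Measure (Euc N))).toReal
  have hκ : 0 ≤ κ := ENNReal.toReal_nonneg
  have hnrmq : 0 ≤ nrmq N p u := ENNReal.toReal_nonneg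
  have hnrm1 : 0 ≤ nrm1 N u := ENNReal.toReal_nonneg
  have : 0 ≤ (q - 1) * N := mul_nonneg (by linarith) N.cast_nonneg
  calc ((N : ℝ) ^ (N - 1) * omegaS N) ^ (q - 1) * nrmq N q u ^ q
      = κ ^ ((q - 1) * N) * nrmq N q u ^ q := by
        rw [toReal_isoperimetricConst_rpow (ne_zero_of_holderConjugate hp)]
    _ ≤ κ ^ ((q - 1) * N) *
          (nrm1 N u ^ (q - (q - 1) * N) * nrmq N p u ^ ((q - 1) * N)) := by
        gcongr
        exact hu.nrmq_rpow_le hp hq hqp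
    _ = nrm1 N u ^ (q - (q - 1) * N) * (κ * nrmq N p u) ^ ((q - 1) * N) := by
        rw [Real.mul_rpow hκ hnrmq]
        ring
    _ ≤ nrm1 N u ^ (q - (q - 1) * N) * tv N u ^ ((q - 1) * N) := by
        gcongr
        exact hu.toReal_isoperimetricConst_mul_nrmq_le hp

theorem ratioQ_le (hu : MemBV N u) (hp : (N : ℝ).HolderConjugate p) (hq : 1 ≤ q)
    (hqp : q ≤ p) : ratioQ N q u ≤ (1 / ((N : ℝ) ^ (N - 1) * omegaS N)) ^ (q - 1) := by
  have hω := pow_mul_omegaS_pos (ne_zero_of_holderConjugate hp)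
  have h_nonneg : 0 ≤ nrm1 N u ^ (q - (q - 1) * N) * tv N u ^ ((q - 1) * N) :=
    mul_nonneg (Real.rpow_nonneg ENNReal.toReal_nonneg _) (Real.rpow_nonneg hu.tv_nonneg _)
  refine div_le_of_le_mul₀ h_nonneg (by positivity) ?_
  rw [one_div, Real.inv_rpow hω.le, inv_mul_eq_div, le_div_iff₀' (by positivity)]
  exact hu.mul_nrmq_rpow_le hp hq hqp

end MemBV

end GagliardoNirenberg

section Maximizers

variable {N : ℕ} {p q R c X Y : ℝ}

lemma nrm1_eq_nrmq_one (u : Euc N → ℝ) : nrm1 N u = nrmq N 1 u := by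
  simp [nrm1, nrmq]

lemma nrmq_indicator_const (hq : 0 < q) {s : Set (Euc N)} (hs : MeasurableSet s) (hc : 0 ≤ c) :
    nrmq N q (s.indicator fun _ ↦ c) = c * volume.real s ^ (1 / q) := by
  rw [nrmq, eLpNorm_indicator_const hs (by simpa using hq) ENNReal.ofReal_ne_top,
    ENNReal.toReal_mul, toReal_enorm, Real.norm_of_nonneg hc, ← ENNReal.toReal_rpow,
    ENNReal.toReal_ofReal hq.le, measureReal_def]

lemma nrm1_indicator_const {s : Set (Euc N)} (hs : MeasurableSet s) (hc : 0 ≤ c) :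
    nrm1 N (s.indicator fun _ ↦ c) = c * volume.real s := by
  rw [nrm1_eq_nrmq_one, nrmq_indicator_const one_pos hs hc, one_div_one, Real.rpow_one]

lemma nrm1_indicator_ball_pos (hR : 0 < R) (hc : 0 < c) :
    0 < nrm1 N ((Metric.ball 0 R).indicator fun _ ↦ c) := by
  have := measureReal_ball_zero_one_pos N
  rw [nrm1_indicator_const measurableSet_ball hc.le, measureReal_ball_zero_eq hR]
  positivity

lemma memBV_indicator_ball (hR : 0 < R) (hc : 0 ≤ c) :
    MemBV N ((Metric.ball 0 R).indicator fun _ ↦ c) :=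
  ⟨(integrable_indicator_iff measurableSet_ball).2 (integrableOn_const measure_ball_lt_top.ne),
    _, mem_upperBounds_TVSet_indicator_ball hR hc⟩

lemma mul_nrmq_indicator_ball_rpow (hN : N ≠ 0) (hq : 0 < q) (hR : 0 < R) (hc : 0 < c) :
    ((N : ℝ) ^ (N - 1) * omegaS N) ^ (q - 1) *
        nrmq N q ((Metric.ball 0 R).indicator fun _ ↦ c) ^ q =
      nrm1 N ((Metric.ball 0 R).indicator fun _ ↦ c) ^ (q - (q - 1) * N) *
        (c * (omegaS N * R ^ (N - 1))) ^ ((q - 1) * N) := by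
  rw [nrm1_indicator_const measurableSet_ball hc.le,
    nrmq_indicator_const hq measurableSet_ball hc.le, measureReal_ball_zero_eq hR]
  set β := volume.real (Metric.ball (0 : Euc N) 1)
  have hβ : 0 < β := measureReal_ball_zero_one_pos N
  have hω : omegaS N = N * β := rfl
  have hK := pow_mul_omegaS_pos hN
  set K := (N : ℝ) ^ (N - 1) * omegaS N
  set X := c * (β * R ^ N)
  have hX : 0 < X := by positivity
  have hY : 0 ≤ c * (omegaS N * R ^ (N - 1)) := by rw [hω]; positivity
  have h_pow : (c * (omegaS N * R ^ (N - 1))) ^ N = K * c * X ^ (N - 1) := by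
    obtain ⟨n, rfl⟩ := Nat.exists_eq_succ_of_ne_zero hN
    simp only [K, X, hω, Nat.succ_eq_add_one, Nat.add_sub_cancel]
    ring
  calc K ^ (q - 1) * (c * (β * R ^ N) ^ (1 / q)) ^ q
      = K ^ (q - 1) * c ^ (q - 1) * X := by
        rw [Real.mul_rpow hc.le (by positivity), ← Real.rpow_mul (by positivity),
          one_div_mul_cancel hq.ne', Real.rpow_one, Real.rpow_sub_one hc.ne']
        simp only [X]
        field_simp
    _ = (K * c) ^ (q - 1) * X ^ (q - (q - 1) * N + (N - 1 : ℕ) * (q - 1)) := by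
        rw [Real.mul_rpow hK.le hc.le, Nat.cast_pred (Nat.pos_of_ne_zero hN)]
        ring_nf
        rw [Real.rpow_one]
    _ = X ^ (q - (q - 1) * N) * (c * (omegaS N * R ^ (N - 1))) ^ ((q - 1) * N) := by
        rw [mul_comm (q - 1) (N : ℝ), Real.rpow_natCast_mul hY, h_pow,
          Real.mul_rpow (x := K * c) (by positivity) (by positivity), Real.rpow_add hX,
          Real.rpow_natCast_mul hX.le]
        ring

lemma tv_indicator_ball (hp : (N : ℝ).HolderConjugate p) (hR : 0 < R) (hc : 0 < c) :
    tv N ((Metric.ball 0 R).indicator fun _ ↦ c) = c * (omegaS N * R ^ (N - 1)) := by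
  refine le_antisymm (tv_le_of_mem_upperBounds (mem_upperBounds_TVSet_indicator_ball hR hc.le)) ?_
  have hN := ne_zero_of_holderConjugate hp
  have hBV := memBV_indicator_ball (N := N) hR hc.le
  have h := hBV.mul_nrmq_rpow_le hp hp.symm.lt.le le_rfl
  rw [mul_nrmq_indicator_ball_rpow hN hp.symm.pos hR hc] at h
  have hY : 0 ≤ c * (omegaS N * R ^ (N - 1)) := by
    rw [omegaS]
    positivity
  refine (Real.rpow_le_rpow_iff hY hBV.tv_nonneg ?_).1
    (le_of_mul_le_mul_left h (Real.rpow_pos_of_pos (nrm1_indicator_ball_pos hR hc) _))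
  exact mul_pos hp.symm.sub_one_pos hp.pos

lemma ratioQ_indicator_ball (hp : (N : ℝ).HolderConjugate p) (hq : 0 < q)
    (hR : 0 < R) (hc : 0 < c) :
    ratioQ N q ((Metric.ball 0 R).indicator fun _ ↦ c) =
      (1 / ((N : ℝ) ^ (N - 1) * omegaS N)) ^ (q - 1) := by
  have hN := ne_zero_of_holderConjugate hp
  have hK := pow_mul_omegaS_pos hN
  have h_tv : 0 < tv N ((Metric.ball 0 R).indicator fun _ ↦ c) := by
    rw [tv_indicator_ball hp hR hc]
    exact mul_pos hc (mul_pos (pos_of_mul_pos_right hK (by positivity)) (by positivity))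
  have h_nrm1 := nrm1_indicator_ball_pos (N := N) hR hc
  have h := mul_nrmq_indicator_ball_rpow hN hq hR hc
  rw [← tv_indicator_ball hp hR hc] at h
  rw [ratioQ, div_eq_iff (by positivity), ← h, one_div, Real.inv_rpow hK.le,
    inv_mul_cancel_left₀ (by positivity)]

theorem EqSup_eq (hp : (N : ℝ).HolderConjugate p) (hq : 1 ≤ q) (hqp : q ≤ p) :
    EqSup N q = (1 / ((N : ℝ) ^ (N - 1) * omegaS N)) ^ (q - 1) := by
  refine IsGreatest.csSup_eq ⟨⟨(Metric.ball 0 1).indicator fun _ ↦ 1,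
    memBV_indicator_ball one_pos zero_le_one, ?_,
    (ratioQ_indicator_ball hp (by linarith) one_pos one_pos).symm⟩, ?_⟩
  · exact fun h ↦ one_ne_zero ((by simpa using congr_fun h 0) : (1 : ℝ) = 0)
  · rintro _ ⟨u, hu, -, rfl⟩
    exact hu.ratioQ_le hp hq hqp

lemma exists_indicator_ball_nrm1_eq_tv_eq (hp : (N : ℝ).HolderConjugate p) (hX : 0 < X)
    (hY : 0 < Y) : ∃ R > 0, ∃ c > 0,
      nrm1 N ((Metric.ball 0 R).indicator fun _ ↦ c) = X ∧
        tv N ((Metric.ball 0 R).indicator fun _ ↦ c) = Y := by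
  have hN : 0 < N := Nat.pos_of_ne_zero (ne_zero_of_holderConjugate hp)
  have hβ := measureReal_ball_zero_one_pos N
  have hR : 0 < N * X / Y := by positivity
  set R := N * X / Y
  have h_ball := measureReal_ball_zero_eq (N := N) hR
  set β := volume.real (Metric.ball (0 : Euc N) 1)
  have hω : omegaS N = N * β := rfl
  refine ⟨R, hR, X / (β * R ^ N), by positivity, ?_, ?_⟩
  · rw [nrm1_indicator_const measurableSet_ball (by positivity), h_ball]
    field_simp
  · rw [tv_indicator_ball hp hR (by positivity), hω, ← pow_sub_one_mul hN.ne' R]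
    simp only [R]
    field_simp

end Maximizers

section Positivity

variable {N : ℕ} {p q a b : ℝ} {u : Euc N → ℝ}

namespace MemBV

lemma tv_eq_zero_of_ae_eq_zero (hu : MemBV N u) (h : u =ᵐ[volume] 0) : tv N u = 0 := by
  refine le_antisymm (tv_le_of_mem_upperBounds <| mem_upperBounds_TVSet_iff.2 fun ψ _ ↦ ?_)
    hu.tv_nonneg
  refine (integral_eq_zero_of_ae (h.mono fun x hx ↦ ?_)).le
  simp [hx]

lemma nrmq_pos (hu : MemBV N u) (hp : (N : ℝ).HolderConjugate p) (hq : 1 ≤ q) (hqp : q ≤ p)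
    (h : ¬u =ᵐ[volume] 0) : 0 < nrmq N q u := by
  refine ENNReal.toReal_pos ?_ (hu.memLp hp hq hqp).eLpNorm_ne_top
  rwa [Ne, eLpNorm_eq_zero_iff hu.1.1 (by simpa using by linarith)]

lemma nrm1_pos (hu : MemBV N u) (h : ¬u =ᵐ[volume] 0) : 0 < nrm1 N u := by
  refine ENNReal.toReal_pos ?_ (memLp_one_iff_integrable.2 hu.1).eLpNorm_ne_top
  rwa [Ne, eLpNorm_eq_zero_iff hu.1.1 one_ne_zero]

lemma tv_pos (hu : MemBV N u) (hp : (N : ℝ).HolderConjugate p) (h : ¬u =ᵐ[volume] 0) :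
    0 < tv N u := by
  have : NeZero N := ⟨ne_zero_of_holderConjugate hp⟩
  have hκ := ENNReal.toReal_pos (isoperimetricConst_ne_zero (volume : Measure (Euc N)))
    (isoperimetricConst_ne_top _)
  exact (mul_pos hκ (hu.nrmq_pos hp hp.symm.lt.le le_rfl h)).trans_le
    (hu.toReal_isoperimetricConst_mul_nrmq_le hp)

lemma not_ae_eq_zero_of_rpow_add_rpow_eq_one (hu : MemBV N u) (ha : a ≠ 0) (hb : b ≠ 0)
    (h : tv N u ^ a + nrm1 N u ^ b = 1) : ¬u =ᵐ[volume] 0 := by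
  intro hu0
  have h_nrm1 : nrm1 N u = 0 := by rw [nrm1, eLpNorm_congr_ae hu0]; simp
  simp [hu.tv_eq_zero_of_ae_eq_zero hu0, h_nrm1, ha, hb] at h

end MemBV

end Positivity

section Reduction

variable {N : ℕ} {p q a b d X Y t : ℝ} {u : Euc N → ℝ}

/-- The function `g` to which the variational problem `α_v` in dimension `d` is reduced: on the
constraint set, `t` stands for the ratio `‖u‖_{TV}^a / ‖u‖_1^b`. -/
def reducedProfile (d q a b t : ℝ) : ℝ :=
  ((1 + t) ^ (1 / b) - 1) * (1 + t) ^ ((q - 1) * (d / a - (d - 1) / b)) / t ^ ((q - 1) * d / a)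

lemma reducedProfile_div (ha : a ≠ 0) (hb : b ≠ 0) (hX : 0 < X) (hY : 0 < Y)
    (h : Y ^ a + X ^ b = 1) :
    reducedProfile d q a b (Y ^ a / X ^ b) =
      (1 - X) / (X ^ (q - (q - 1) * d) * Y ^ ((q - 1) * d)) := by
  have h_one_add : 1 + Y ^ a / X ^ b = X ^ (-b) := by
    rw [Real.rpow_neg hX.le]
    field_simp
    linarith
  have h_div : (Y ^ a / X ^ b) ^ ((q - 1) * d / a) =
      Y ^ ((q - 1) * d) / X ^ (b * ((q - 1) * d / a)) := by
    rw [Real.div_rpow (by positivity) (by positivity), ← Real.rpow_mul hY.le, ← Real.rpow_mul hX.le,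
      mul_div_cancel₀ _ ha]
  have h_exponent : -b * ((q - 1) * (d / a - (d - 1) / b)) =
      1 - (q - (q - 1) * d) - b * ((q - 1) * d / a) := by
    field_simp
    ring
  rw [reducedProfile, h_one_add, h_div, ← Real.rpow_mul hX.le, ← Real.rpow_mul hX.le, h_exponent,
    mul_one_div, neg_div_self hb, Real.rpow_neg_one, Real.rpow_sub hX, Real.rpow_sub hX,
    Real.rpow_one]
  field_simp

lemma exists_rpow_add_rpow_eq_one_div_eq (ha : a ≠ 0) (hb : b ≠ 0) (ht : 0 < t) :
    ∃ X > 0, ∃ Y > 0, Y ^ a + X ^ b = 1 ∧ Y ^ a / X ^ b = t := by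
  refine ⟨(1 / (1 + t)) ^ b⁻¹, by positivity, (t / (1 + t)) ^ a⁻¹, by positivity, ?_⟩
  rw [Real.rpow_inv_rpow (by positivity) ha, Real.rpow_inv_rpow (by positivity) hb]
  constructor <;> field_simp
  ring

namespace MemBV

lemma one_sub_nrm1_div_eq (hu : MemBV N u) (hp : (N : ℝ).HolderConjugate p) (ha : a ≠ 0)
    (hb : b ≠ 0) (h : tv N u ^ a + nrm1 N u ^ b = 1) :
    (1 - nrm1 N u) / nrmq N q u ^ q =
      reducedProfile N q a b (tv N u ^ a / nrm1 N u ^ b) / ratioQ N q u := by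
  have hu0 := hu.not_ae_eq_zero_of_rpow_add_rpow_eq_one ha hb h
  have h_nrm1 := hu.nrm1_pos hu0
  have h_tv := hu.tv_pos hp hu0
  rw [reducedProfile_div ha hb h_nrm1 h_tv h, ratioQ, div_div_div_cancel_right₀ (by positivity)]

theorem exists_reducedProfile_le (hu : MemBV N u) (hp : (N : ℝ).HolderConjugate p) (hq : 1 ≤ q)
    (hqp : q ≤ p) (ha : a ≠ 0) (hb : 0 < b) (h : tv N u ^ a + nrm1 N u ^ b = 1) :
    ∃ t > 0, 1 / EqSup N q * reducedProfile N q a b t ≤ (1 - nrm1 N u) / nrmq N q u ^ q := by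
  have hu0 := hu.not_ae_eq_zero_of_rpow_add_rpow_eq_one ha hb.ne' h
  have h_nrm1 := hu.nrm1_pos hu0
  have h_tv := hu.tv_pos hp hu0
  have h_nrmq := hu.nrmq_pos hp hq hqp hu0
  have h_ratioQ : 0 < ratioQ N q u := by rw [ratioQ]; positivity
  have h_nrm1_le : nrm1 N u ≤ 1 :=
    le_of_not_gt fun h1 ↦ by linarith [Real.one_lt_rpow h1 hb, Real.rpow_pos_of_pos h_tv a]
  refine ⟨tv N u ^ a / nrm1 N u ^ b, by positivity, ?_⟩
  rw [hu.one_sub_nrm1_div_eq hp ha hb.ne' h, one_div_mul_eq_div,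
    reducedProfile_div ha hb.ne' h_nrm1 h_tv h, EqSup_eq hp hq hqp]
  have : 0 ≤ 1 - nrm1 N u := by linarith
  gcongr
  exact hu.ratioQ_le hp hq hqp

end MemBV

theorem exists_memBV_eq_reducedProfile (hp : (N : ℝ).HolderConjugate p) (hq : 1 ≤ q)
    (hqp : q ≤ p) (ha : a ≠ 0) (hb : b ≠ 0) (ht : 0 < t) :
    ∃ u : Euc N → ℝ, MemBV N u ∧ tv N u ^ a + nrm1 N u ^ b = 1 ∧
      (1 - nrm1 N u) / nrmq N q u ^ q = 1 / EqSup N q * reducedProfile N q a b t := by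
  obtain ⟨X, hX, Y, hY, h, rfl⟩ := exists_rpow_add_rpow_eq_one_div_eq ha hb ht
  obtain ⟨R, hR, c, hc, rfl, rfl⟩ := exists_indicator_ball_nrm1_eq_tv_eq hp hX hY
  have hu := memBV_indicator_ball (N := N) hR hc.le
  refine ⟨_, hu, h, ?_⟩
  rw [hu.one_sub_nrm1_div_eq hp ha hb h, EqSup_eq hp hq hqp,
    ratioQ_indicator_ball hp (by linarith) hR hc, one_div_mul_eq_div]

theorem alphav_eq_inf_g_general (hN : 2 ≤ N) (hq : 1 ≤ q) (hqp : q ≤ (N : ℝ) / ((N : ℝ) - 1))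
    (ha : a ≠ 0) (hb : 0 < b) :
    sInf {r | ∃ u : Euc N → ℝ, MemBV N u ∧ tv N u ^ a + nrm1 N u ^ b = 1 ∧
        r = (1 - nrm1 N u) / nrmq N q u ^ q} =
      1 / (1 / ((N : ℝ) ^ (N - 1) * omegaS N)) ^ (q - 1) *
        sInf {r | ∃ t : ℝ, 0 < t ∧ r = reducedProfile N q a b t} := by
  have hp : (N : ℝ).HolderConjugate (N / (N - 1)) :=
    Real.HolderConjugate.conjExponent (by exact_mod_cast hN)
  have hE : 0 ≤ 1 / (1 / ((N : ℝ) ^ (N - 1) * omegaS N)) ^ (q - 1) := by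
    have := pow_mul_omegaS_pos (N := N) (by lia)
    positivity
  rw [← smul_eq_mul, ← Real.sInf_smul_of_nonneg hE, ← EqSup_eq hp hq hqp]
  refine csInf_eq_csInf_of_forall_exists_le ?_ ?_
  · rintro _ ⟨u, hu, h, rfl⟩
    obtain ⟨t, ht, hle⟩ := hu.exists_reducedProfile_le hp hq hqp ha hb h
    exact ⟨_, Set.smul_mem_smul_set ⟨t, ht, rfl⟩, hle⟩
  · rintro _ ⟨_, ⟨t, ht, rfl⟩, rfl⟩
    obtain ⟨u, hu, h, heq⟩ := exists_memBV_eq_reducedProfile hp hq hqp ha hb.ne' ht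
    exact ⟨_, ⟨u, hu, h, rfl⟩, heq.le⟩

end Reduction

/-- `α_v = (1/E_q) inf_{t>0} g(t)`. -/
theorem alphav_eq_inf_g (N : ℕ) (hN : 2 ≤ N) (q : ℝ) (hq1 : 1 < q)
    (hq2 : q ≤ (N : ℝ) / ((N : ℝ) - 1)) (a b : ℝ) (ha : 0 < a) (hb : 0 < b) :
    sInf { r | ∃ u : Euc N → ℝ, MemBV N u ∧ tv N u ^ a + nrm1 N u ^ b = 1 ∧
        r = (1 - nrm1 N u) / nrmq N q u ^ q } =
    (1 / (1 / ((N : ℝ) ^ (N - 1) * omegaS N)) ^ (q - 1)) *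
      sInf { r | ∃ t : ℝ, 0 < t ∧
        r = ((1+t) ^ (1/b) - 1) * (1+t) ^ ((q-1)*((N:ℝ)/a - ((N:ℝ)-1)/b)) /
              t ^ ((q-1)*(N:ℝ)/a) } :=
  alphav_eq_inf_g_general hN hq1.le hq2 ha.ne' hb
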